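/- arXiv:0707.2421 — 2 statements merged into one kernel-verified Lean document; each statement's English description precedes it below -/
import Mathlib

section
/- Let a, b ≥ 0 be integers, let g ∈ {A2, C2, G2}, and for j ≥ 0 let N_j denote the number of tableaux T ∈ S_g(a,b) with r_g(T) = j, where r_g is the corresponding rank statistic. Set l = 2a + 2b if g = A2, l = 3a + 4b if g = C2, and l = 6a + 10b if g = G2. Then the sequence N_0, N_1, ..., N_l is symmetric and unimodal: N_j = N_{l−j} for all 0 ≤ j ≤ l, and N_0 ≤ N_1 ≤ ... ≤ N_{⌊l/2⌋}. -/
/-!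
The proof is standard monomial theory for the flag varieties of rank two.

For each type there are the column functions: polynomials `f c`, one for every admissible column
`c`, on the open cell of the flag variety. They are the coordinates of a highest weight orbit vector
in the two fundamental representations, multiplied by variables `X` (columns of length one) and `Y`
(columns of length two) that record the shape. The span `V K j` of the monomials in the column
functions of shape `K = (b, a)` and rank `j` is a graded piece of the irreducible representation
with highest weight of shape `(a, b)`, graded by the principal grading.

* Call a multiset of columns standard if its members are pairwise compatible. A tableau is the same
  as a standard multiset whose columns have been sorted (`ncard_A2`, `ncard_C2`, `ncard_G2`). In
  type `G₂` this uses that compatibility of adjacent columns forces compatibility of all pairs.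
* The product of two incompatible columns is an integral combination of products of smaller weight
  (`relA2`, `relC2`, `relG2`), so the standard monomials span `V K j` (`ColSys.V_le_span_std`).
* After a suitable substitution every column function has a single monomial of largest weight. The
  product of these leading monomials determines a standard multiset of given shape (`inj_A2`,
  `inj_C2`, `inj_G2`), so the standard monomials are linearly independent. Hence the dimension of
  `V K j` is the number of tableaux of rank `j`.
* The principal `sl₂` acts on polynomials through two derivations `E` and `F`, which raise and lower
  the rank by one and whose commutator multiplies `V K j` by `2 j - l` (`ColSys.comm_V`; it suffices
  to check this on columns). As `V K j = 0` unless `0 ≤ j ≤ l`, the power `E ^ (l - 2 j)` is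
  injective on `V K j`, and likewise for `F`, which gives symmetry and unimodality of the dimensions
  (`sl2_symm_unimodal`).
-/

/-- A filling of the shape with `b` columns of length two (each recorded as
(top entry, bottom entry)) followed by `a` columns of length one. -/
abbrev TabT (a b : ℕ) : Type := (Fin b → ℕ × ℕ) × (Fin a → ℕ)

/-- `n_k(T)`: the number of entries of the tableau `T` equal to `k`. -/
def nkOf {m n : ℕ} (T : (Fin m → ℕ × ℕ) × (Fin n → ℕ)) (k : ℕ) : ℕ :=
  (Finset.univ.filter fun j : Fin m => (T.1 j).1 = k).card +
    (Finset.univ.filter fun j : Fin m => (T.1 j).2 = k).card +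
    (Finset.univ.filter fun i : Fin n => T.2 i = k).card

/-- The set of `A2`-semistandard tableaux of shape `(a,b)`: entries from `{1,2,3}`,
rows weakly increasing, columns strictly increasing. -/
def SA2 (a b : ℕ) : Set (TabT a b) :=
  {T | (∀ j : Fin b, 1 ≤ (T.1 j).1 ∧ (T.1 j).1 ≤ 3 ∧ 1 ≤ (T.1 j).2 ∧ (T.1 j).2 ≤ 3 ∧
          (T.1 j).1 < (T.1 j).2) ∧
       (∀ i : Fin a, 1 ≤ T.2 i ∧ T.2 i ≤ 3) ∧
       (∀ j j' : Fin b, j ≤ j' → (T.1 j).1 ≤ (T.1 j').1 ∧ (T.1 j).2 ≤ (T.1 j').2) ∧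
       (∀ i i' : Fin a, i ≤ i' → T.2 i ≤ T.2 i') ∧
       (∀ (j : Fin b) (i : Fin a), (T.1 j).1 ≤ T.2 i)}

/-- The set of `C2`-semistandard tableaux of shape `(a,b)`: entries from `{1,2,3,4}`,
rows weakly increasing, columns strictly increasing, no column equal to `(1,4)`,
and at most one column equal to `(2,3)`. -/
def SC2 (a b : ℕ) : Set (TabT a b) :=
  {T | (∀ j : Fin b, 1 ≤ (T.1 j).1 ∧ (T.1 j).1 ≤ 4 ∧ 1 ≤ (T.1 j).2 ∧ (T.1 j).2 ≤ 4 ∧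
          (T.1 j).1 < (T.1 j).2) ∧
       (∀ i : Fin a, 1 ≤ T.2 i ∧ T.2 i ≤ 4) ∧
       (∀ j j' : Fin b, j ≤ j' → (T.1 j).1 ≤ (T.1 j').1 ∧ (T.1 j).2 ≤ (T.1 j').2) ∧
       (∀ i i' : Fin a, i ≤ i' → T.2 i ≤ T.2 i') ∧
       (∀ (j : Fin b) (i : Fin a), (T.1 j).1 ≤ T.2 i) ∧
       (∀ j : Fin b, T.1 j ≠ (1, 4)) ∧
       (∀ j j' : Fin b, T.1 j = (2, 3) → T.1 j' = (2, 3) → j = j')}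

/-- The restrictions of Figure 4.5 on a pair of adjacent length-two columns of a
`G2`-semistandard tableau. -/
def g2pair2 (c c' : ℕ × ℕ) : Prop :=
  (c = (1, 4) → c' ≠ (1, 4) ∧ c' ≠ (1, 5) ∧ c' ≠ (1, 6) ∧ c' ≠ (1, 7)) ∧
  (c = (1, 5) → c' ≠ (1, 5) ∧ c' ≠ (1, 6) ∧ c' ≠ (1, 7)) ∧
  (c = (1, 6) → c' ≠ (1, 6) ∧ c' ≠ (1, 7) ∧ c' ≠ (2, 6) ∧ c' ≠ (2, 7)) ∧
  (c = (2, 6) → c' ≠ (2, 6) ∧ c' ≠ (2, 7)) ∧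
  (c = (1, 7) → c' ≠ (1, 7) ∧ c' ≠ (2, 7) ∧ c' ≠ (3, 7) ∧ c' ≠ (4, 7)) ∧
  (c = (2, 7) → c' ≠ (2, 7) ∧ c' ≠ (3, 7) ∧ c' ≠ (4, 7)) ∧
  (c = (3, 7) → c' ≠ (3, 7) ∧ c' ≠ (4, 7)) ∧
  (c = (4, 7) → c' ≠ (4, 7))

/-- The restrictions of Figure 4.5 on a length-two column followed by a
length-one column in a `G2`-semistandard tableau. -/
def g2pair1 (c : ℕ × ℕ) (e : ℕ) : Prop :=
  (c = (1, 4) → e ≠ 1) ∧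
  (c = (1, 5) → e ≠ 1) ∧
  (c = (1, 6) → e ≠ 1 ∧ e ≠ 2) ∧
  (c = (2, 6) → e ≠ 2) ∧
  (c = (1, 7) → e ≠ 1 ∧ e ≠ 2 ∧ e ≠ 3 ∧ e ≠ 4) ∧
  (c = (2, 7) → e ≠ 2 ∧ e ≠ 3 ∧ e ≠ 4) ∧
  (c = (3, 7) → e ≠ 3 ∧ e ≠ 4) ∧
  (c = (4, 7) → e ≠ 4)

/-- The set of `G2`-semistandard tableaux of shape `(a,b)`. -/
def SG2 (a b : ℕ) : Set (TabT a b) :=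
  {T | (∀ j : Fin b, 1 ≤ (T.1 j).1 ∧ (T.1 j).1 ≤ 7 ∧ 1 ≤ (T.1 j).2 ∧ (T.1 j).2 ≤ 7 ∧
          (T.1 j).1 < (T.1 j).2) ∧
       (∀ i : Fin a, 1 ≤ T.2 i ∧ T.2 i ≤ 7) ∧
       (∀ j j' : Fin b, j ≤ j' → (T.1 j).1 ≤ (T.1 j').1 ∧ (T.1 j).2 ≤ (T.1 j').2) ∧
       (∀ i i' : Fin a, i ≤ i' → T.2 i ≤ T.2 i') ∧
       (∀ (j : Fin b) (i : Fin a), (T.1 j).1 ≤ T.2 i) ∧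
       (∀ i i' : Fin a, T.2 i = 4 → T.2 i' = 4 → i = i') ∧
       (∀ j : Fin b, T.1 j ≠ (2, 3) ∧ T.1 j ≠ (2, 4) ∧ T.1 j ≠ (3, 4) ∧ T.1 j ≠ (3, 5) ∧
          T.1 j ≠ (4, 5) ∧ T.1 j ≠ (4, 6) ∧ T.1 j ≠ (5, 6)) ∧
       (∀ j j' : Fin b, (j' : ℕ) = (j : ℕ) + 1 → g2pair2 (T.1 j) (T.1 j')) ∧
       (∀ (j : Fin b) (i : Fin a), (j : ℕ) + 1 = b → (i : ℕ) = 0 → g2pair1 (T.1 j) (T.2 i))}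
/-- The rank statistic on `A2`-semistandard tableaux. -/
def rA2 {a b : ℕ} (T : TabT a b) : ℕ :=
  (∑ j : Fin b, ((2 - (T.1 j).1) + (3 - (T.1 j).2))) + ∑ i : Fin a, (3 - T.2 i)

/-- The rank statistic on `C2`-semistandard tableaux. -/
def rC2 {a b : ℕ} (T : TabT a b) : ℕ :=
  (∑ j : Fin b, ((3 - (T.1 j).1) + (4 - (T.1 j).2))) + ∑ i : Fin a, (4 - T.2 i)

/-- The rank contribution `c` of a length-two column of a `G2`-semistandard tableau. -/
def cG2col : ℕ × ℕ → ℕ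
  | (1, 2) => 10
  | (1, 3) => 9
  | (1, 4) => 8
  | (1, 5) => 7
  | (1, 6) => 6
  | (1, 7) => 5
  | (2, 5) => 6
  | (2, 6) => 5
  | (2, 7) => 4
  | (3, 6) => 4
  | (3, 7) => 3
  | (4, 7) => 2
  | (5, 7) => 1
  | (6, 7) => 0
  | _ => 0

/-- The rank statistic on `G2`-semistandard tableaux. -/
def rG2 {a b : ℕ} (T : TabT a b) : ℕ :=
  (∑ j : Fin b, cG2col (T.1 j)) + ∑ i : Fin a, (7 - T.2 i)

/-- `N_j` for the `A2`-semistandard lattice: the number of tableaux of rank `j`. -/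
noncomputable def NA2 (a b j : ℕ) : ℕ := {T ∈ SA2 a b | rA2 T = j}.ncard

/-- `N_j` for the `C2`-semistandard lattice. -/
noncomputable def NC2 (a b j : ℕ) : ℕ := {T ∈ SC2 a b | rC2 T = j}.ncard

/-- `N_j` for the `G2`-semistandard lattice. -/
noncomputable def NG2 (a b j : ℕ) : ℕ := {T ∈ SG2 a b | rG2 T = j}.ncard

/-! ### Graded sl₂-modules -/

section SlTwo

variable {M : Type*} [AddCommGroup M] [Module ℚ M]

/-- The commutation rule `F Eᵐ = Eᵐ F - m (h + m - 1) Eᵐ⁻¹` on vectors of weight `h = 2 j - l`. -/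
lemma sl2_comm (W : ℤ → Submodule ℚ M) (E F : M →ₗ[ℚ] M) (l : ℤ)
    (hE : ∀ j, ∀ x ∈ W j, E x ∈ W (j + 1))
    (hc : ∀ j, ∀ x ∈ W j, E (F x) - F (E x) = ((2 * j - l : ℤ) : ℚ) • x)
    (m : ℕ) : ∀ j, ∀ x ∈ W j, F ((E ^ (m + 1)) x) =
      (E ^ (m + 1)) (F x) - (((m + 1) * (2 * j - l + m) : ℤ) : ℚ) • (E ^ m) x := by
  induction m with
  | zero =>
    intro j x hx
    simpa using (sub_eq_iff_eq_add.mpr (sub_eq_iff_eq_add'.mp (hc j x hx))).symm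
  | succ m ih =>
    intro j x hx
    have h1 := ih (j + 1) (E x) (hE j x hx)
    have h2 := hc j x hx
    have h3 : F (E x) = E (F x) - ((2 * j - l : ℤ) : ℚ) • x := by rw [← h2]; abel
    rw [pow_succ, Module.End.mul_apply, h1, h3, map_sub, map_smul, Module.End.mul_apply]
    have h4 : (E ^ m) (E x) = (E ^ (m + 1)) x := by rw [pow_succ, Module.End.mul_apply]
    rw [h4]
    push_cast
    module

/-- In a graded sl₂-module that vanishes in negative degrees, `E ^ (l - 2 j)` is injective in
degree `j`. -/
lemma sl2_inj (W : ℤ → Submodule ℚ M) (E F : M →ₗ[ℚ] M) (l : ℤ)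
    (hE : ∀ j, ∀ x ∈ W j, E x ∈ W (j + 1)) (hF : ∀ j, ∀ x ∈ W j, F x ∈ W (j - 1))
    (hc : ∀ j, ∀ x ∈ W j, E (F x) - F (E x) = ((2 * j - l : ℤ) : ℚ) • x)
    (hneg : ∀ j < 0, W j = ⊥) (n : ℕ) :
    ∀ (j : ℤ) (m : ℕ), j < n → 2 * j + m = l → ∀ x ∈ W j, (E ^ m) x = 0 → x = 0 := by
  induction n with
  | zero =>
    intro j m hj _ x hx _
    rw [hneg j (by simpa using hj)] at hx
    simpa using hx
  | succ n ih =>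
    intro j m hj hl x hx h0
    have comm := sl2_comm W E F l hE hc
    rcases m with _ | m
    · simpa using h0
    have hFx : F x = 0 := by
      refine ih (j - 1) (m + 1 + 2) (by push_cast at hj; omega) (by push_cast at hl ⊢; omega) _
        (hF j x hx) ?_
      have h1 := comm m j x hx
      rw [h0, map_zero] at h1
      have h2 : (E ^ (m + 1)) (F x) = (((m + 1) * (2 * j - l + m) : ℤ) : ℚ) • (E ^ m) x :=
        (sub_eq_zero.mp h1.symm)
      have h3 : E ((E ^ m) x) = 0 := by rw [← Module.End.mul_apply, ← pow_succ', h0]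
      rw [show m + 1 + 2 = 2 + (m + 1) by ring, pow_add, Module.End.mul_apply, h2, map_smul,
        pow_two, Module.End.mul_apply, h3, map_zero, smul_zero]
    -- `x` is now a lowest weight vector, so `F Eᵏ x` is a non-zero multiple of `Eᵏ⁻¹ x`.
    have key : ∀ k : ℕ, k ≤ m + 1 → (E ^ k) x = 0 → x = 0 := by
      intro k
      induction k with
      | zero => intro _ h; simpa using h
      | succ k ihk =>
        intro hk h
        have h1 := comm k j x hx
        rw [h, hFx, map_zero, map_zero, zero_sub, eq_comm, neg_eq_zero, smul_eq_zero] at h1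
        refine ihk (by omega) (h1.resolve_left ?_)
        push_cast at hl
        exact Int.cast_ne_zero.mpr (mul_ne_zero (by omega) (by omega))
    exact key _ le_rfl h0

/-- Dimension inequalities below the middle of a graded sl₂-module. -/
lemma sl2_finrank_le (W : ℤ → Submodule ℚ M) (E F : M →ₗ[ℚ] M) (l : ℤ)
    (hE : ∀ j, ∀ x ∈ W j, E x ∈ W (j + 1)) (hF : ∀ j, ∀ x ∈ W j, F x ∈ W (j - 1))
    (hc : ∀ j, ∀ x ∈ W j, E (F x) - F (E x) = ((2 * j - l : ℤ) : ℚ) • x)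
    (hneg : ∀ j < 0, W j = ⊥) (hfin : ∀ j, Module.Finite ℚ (W j)) (j : ℤ) (m k : ℕ)
    (hl : 2 * j + m = l) (hk : k ≤ m) :
    Module.finrank ℚ (W j) ≤ Module.finrank ℚ (W (j + k)) := by
  have hEk : ∀ k : ℕ, ∀ j, ∀ x ∈ W j, (E ^ k) x ∈ W (j + k) := by
    intro k
    induction k with
    | zero => intro j x hx; simpa using hx
    | succ k ih =>
      intro j x hx
      rw [pow_succ', Module.End.mul_apply]
      have := hE _ _ (ih j x hx)
      rwa [show j + ((k + 1 : ℕ) : ℤ) = j + k + 1 by push_cast; ring]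
  refine LinearMap.finrank_le_finrank_of_injective (f := (E ^ k).restrict (hEk k j)) ?_
  rw [← LinearMap.ker_eq_bot, LinearMap.ker_eq_bot']
  rintro ⟨x, hx⟩ h0
  have h1 : (E ^ k) x = 0 := congrArg Subtype.val h0
  have h2 : (E ^ m) x = 0 := by
    rw [← Nat.sub_add_cancel hk, pow_add, Module.End.mul_apply, h1, map_zero]
  exact Subtype.ext
    (sl2_inj W E F l hE hF hc hneg (j.toNat + 1) j m (by omega) hl x hx h2)

/-- The dimensions of the graded pieces of an sl₂-module are symmetric and unimodal. -/
lemma sl2_symm_unimodal (W : ℤ → Submodule ℚ M) (E F : M →ₗ[ℚ] M) (l : ℕ)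
    (hE : ∀ j, ∀ x ∈ W j, E x ∈ W (j + 1)) (hF : ∀ j, ∀ x ∈ W j, F x ∈ W (j - 1))
    (hc : ∀ j, ∀ x ∈ W j, E (F x) - F (E x) = ((2 * j - l : ℤ) : ℚ) • x)
    (hneg : ∀ j < 0, W j = ⊥) (hbig : ∀ j > (l : ℤ), W j = ⊥)
    (hfin : ∀ j, Module.Finite ℚ (W j)) (N : ℕ → ℕ)
    (hN : ∀ j : ℕ, N j = Module.finrank ℚ (W j)) :
    (∀ j, j ≤ l → N j = N (l - j)) ∧ (∀ i j, i ≤ j → j ≤ l / 2 → N i ≤ N j) := by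
  have low : ∀ j, 2 * j ≤ l → N j ≤ N (l - j) := by
    intro j hj
    rw [hN, hN]
    have := sl2_finrank_le W E F l hE hF hc hneg hfin j (l - 2 * j) (l - 2 * j)
      (by omega) le_rfl
    rwa [show (j : ℤ) + ((l - 2 * j : ℕ) : ℤ) = ((l - j : ℕ) : ℤ) by omega] at this
  -- the same inequality for the module with the roles of `E` and `F` exchanged
  have high : ∀ j, 2 * j ≤ l → N (l - j) ≤ N j := by
    intro j hj
    rw [hN, hN]
    have := sl2_finrank_le (fun i => W (l - i)) F E l
      (fun i x hx => by rw [show (l : ℤ) - (i + 1) = l - i - 1 by ring]; exact hF _ x hx)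
      (fun i x hx => by
        rw [show (l : ℤ) - (i - 1) = l - i + 1 by ring]; exact hE _ x hx)
      (fun i x hx => by
        have := hc _ x hx
        rw [← neg_sub, this, ← neg_smul]
        congr 1
        push_cast
        ring)
      (fun i hi => hbig _ (by omega)) (fun i => hfin _) j (l - 2 * j) (l - 2 * j)
      (by omega) le_rfl
    rwa [show (l : ℤ) - ((j : ℤ) + ((l - 2 * j : ℕ) : ℤ)) = (j : ℤ) by omega,
      show (l : ℤ) - (j : ℤ) = ((l - j : ℕ) : ℤ) by omega] at this
  refine ⟨fun j hj => ?_, fun i j hij hj => ?_⟩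
  · rcases le_total (2 * j) l with h | h
    · exact le_antisymm (low j h) (high j h)
    · have h1 := low (l - j) (by omega)
      have h2 := high (l - j) (by omega)
      rw [Nat.sub_sub_self hj] at h1 h2
      exact le_antisymm h2 h1
  · rw [hN, hN]
    have := sl2_finrank_le W E F l hE hF hc hneg hfin i (l - 2 * i) (j - i)
      (by omega) (by omega)
    rwa [show (i : ℤ) + ((j - i : ℕ) : ℤ) = (j : ℤ) by omega] at this

end SlTwo

/-! ### Polynomials with a unique monomial of largest weight -/

section TopMonomial

open MvPolynomial

variable {σ ι : Type*}

/-- `TopMono ω p e`: the monomial `e` occurs in `p`, and every other monomial of `p` has strictly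
smaller `ω`-weight. -/
def TopMono (ω : (σ →₀ ℕ) →+ ℕ) (p : MvPolynomial σ ℚ) (e : σ →₀ ℕ) : Prop :=
  ∃ c : ℚ, ∃ q : MvPolynomial σ ℚ, c ≠ 0 ∧ p = monomial e c + q ∧ ∀ e' ∈ q.support, ω e' < ω e

lemma TopMono.one (ω : (σ →₀ ℕ) →+ ℕ) : TopMono ω 1 0 := ⟨1, 0, one_ne_zero, by simp, by simp⟩

lemma TopMono.mul {ω : (σ →₀ ℕ) →+ ℕ} {p p' : MvPolynomial σ ℚ} {e e' : σ →₀ ℕ}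
    (h : TopMono ω p e) (h' : TopMono ω p' e') : TopMono ω (p * p') (e + e') := by
  classical
  obtain ⟨c, q, hc, rfl, hq⟩ := h
  obtain ⟨c', q', hc', rfl, hq'⟩ := h'
  refine ⟨c * c', monomial e c * q' + (q * monomial e' c' + q * q'), mul_ne_zero hc hc', ?_, ?_⟩
  · rw [← monomial_mul]; ring
  · have key : ∀ (r s : MvPolynomial σ ℚ) (x : σ →₀ ℕ), x ∈ (r * s).support →
        ∃ y ∈ r.support, ∃ z ∈ s.support, x = y + z := by
      intro r s x hx
      obtain ⟨y, hy, z, hz, h⟩ := Finset.mem_add.mp (support_mul r s hx)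
      exact ⟨y, hy, z, hz, h.symm⟩
    intro x hx
    rcases Finset.mem_union.mp (support_add hx) with h | h
    · obtain ⟨y, hy, z, hz, rfl⟩ := key _ _ _ h
      obtain rfl := Finset.mem_singleton.mp (support_monomial_subset hy)
      have := hq' z hz
      simp only [map_add]; omega
    · rcases Finset.mem_union.mp (support_add h) with h | h
      · obtain ⟨y, hy, z, hz, rfl⟩ := key _ _ _ h
        obtain rfl := Finset.mem_singleton.mp (support_monomial_subset hz)
        have := hq y hy
        simp only [map_add]; omega
      · obtain ⟨y, hy, z, hz, rfl⟩ := key _ _ _ h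
        have := hq y hy
        have := hq' z hz
        simp only [map_add]; omega

lemma TopMono.multiset_prod {ω : (σ →₀ ℕ) →+ ℕ} {P : ι → MvPolynomial σ ℚ} {ex : ι → σ →₀ ℕ}
    (h : ∀ i, TopMono ω (P i) (ex i)) (m : Multiset ι) :
    TopMono ω (m.map P).prod (m.map ex).sum := by
  induction m using Multiset.induction with
  | empty => simpa using TopMono.one ω
  | cons i m ih => simpa using (h i).mul ih

/-- Polynomials with pairwise distinct top monomials are linearly independent: look at a top
monomial of largest weight in a linear relation. -/
lemma linearIndependent_of_top {ω : (σ →₀ ℕ) →+ ℕ} {P : ι → MvPolynomial σ ℚ} {ex : ι → σ →₀ ℕ}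
    (h : ∀ i, TopMono ω (P i) (ex i)) (hinj : Function.Injective ex) : LinearIndependent ℚ P := by
  classical
  rw [linearIndependent_iff']
  intro s g hg
  by_contra! hne
  obtain ⟨i, his, hi⟩ := hne
  obtain ⟨i₀, hi₀, hmax⟩ := (s.filter fun i => g i ≠ 0).exists_max_image (fun i => ω (ex i))
    ⟨i, by simp [his, hi]⟩
  rw [Finset.mem_filter] at hi₀
  have hcoeff := congrArg (coeff (ex i₀)) hg
  rw [coeff_sum, coeff_zero, Finset.sum_eq_single_of_mem i₀ hi₀.1] at hcoeff
  · obtain ⟨c, q, hc, hP, hq⟩ := h i₀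
    have hq0 : coeff (ex i₀) q = 0 := by
      by_contra hne
      exact lt_irrefl _ (hq _ (mem_support_iff.mpr hne))
    rw [coeff_smul, hP, coeff_add, coeff_monomial, if_pos rfl, hq0, add_zero, smul_eq_mul] at hcoeff
    exact mul_ne_zero hi₀.2 hc hcoeff
  · intro k hk hki
    rw [coeff_smul]
    by_cases hgk : g k = 0
    · rw [hgk, zero_smul]
    obtain ⟨c, q, hc, hP, hq⟩ := h k
    have hle := hmax k (by simp [hk, hgk])
    have hq0 : coeff (ex i₀) q = 0 := by
      by_contra hne
      exact absurd (hq _ (mem_support_iff.mpr hne)) (not_lt.mpr hle)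
    rw [hP, coeff_add, coeff_monomial, if_neg (fun h => hki (hinj h)), hq0, add_zero, smul_zero]

variable {d : ℕ}

/-- The weight `∑ ω i * e i` of a monomial exponent. -/
def wtHom (ω : Fin d → ℕ) : (Fin d →₀ ℕ) →+ ℕ where
  toFun e := ∑ i, ω i * e i
  map_zero' := by simp
  map_add' e e' := by simp [mul_add, Finset.sum_add_distrib]

/-- The polynomial given by a list of coefficients and exponents. -/
noncomputable def polyOf (L : List (ℤ × (Fin d → ℕ))) : MvPolynomial (Fin d) ℚ :=
  (L.map fun t => (t.1 : MvPolynomial (Fin d) ℚ) * ∏ i, X i ^ t.2 i).sum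

lemma polyOf_term (c : ℤ) (e : Fin d → ℕ) :
    (c : MvPolynomial (Fin d) ℚ) * ∏ i, X i ^ e i =
      monomial (Finsupp.equivFunOnFinite.symm e) (c : ℚ) := by
  rw [monomial_eq, Finsupp.prod_fintype _ _ (fun i => pow_zero _)]
  simp

lemma top_polyOf (ω : Fin d → ℕ) (c : ℤ) (e : Fin d → ℕ) (L : List (ℤ × (Fin d → ℕ)))
    (hc : c ≠ 0) (hL : ∀ t ∈ L, ∑ i, ω i * t.2 i < ∑ i, ω i * e i) :
    TopMono (wtHom ω) (polyOf ((c, e) :: L)) (Finsupp.equivFunOnFinite.symm e) := by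
  classical
  refine ⟨c, polyOf L, Int.cast_ne_zero.mpr hc, ?_, ?_⟩
  · rw [← polyOf_term]; simp [polyOf]
  · induction L with
    | nil => simp [polyOf]
    | cons t L ih =>
      intro e' he'
      have h1 : polyOf (t :: L) = monomial (Finsupp.equivFunOnFinite.symm t.2) (t.1 : ℚ) +
          polyOf L := by
        rw [← polyOf_term]; simp [polyOf]
      rw [h1] at he'
      rcases Finset.mem_union.mp (support_add he') with h | h
      · obtain rfl := Finset.mem_singleton.mp (support_monomial_subset h)
        exact hL t (by simp)
      · exact ih (fun t ht => hL t (by simp [ht])) e' h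

end TopMonomial

/-! ### Standard monomials -/

/-- The combinatorial data of a standard monomial theory on `n` columns: the columns `k < p` have
length two and the others length one. -/
structure ColSys (n : ℕ) where
  /-- number of columns of length two -/
  p : ℕ
  /-- rank contribution of a column -/
  rk : Fin n → ℕ
  /-- largest rank contribution of a column of length two -/
  lD : ℕ
  /-- largest rank contribution of a column of length one -/
  lS : ℕ
  /-- whether column `c` may stand to the left of column `d`, for `c ≤ d` -/
  ok : Fin n → Fin n → Bool

namespace ColSys

variable {n : ℕ} (S : ColSys n)

/-- The shape of a single column, as (number of columns of length two, of length one). -/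
def kind (k : Fin n) : ℕ × ℕ := if (k : ℕ) < S.p then (1, 0) else (0, 1)

/-- A multiset of columns is standard if any two of its members are compatible. -/
def Std (m : Multiset (Fin n)) : Prop := ∀ c d, c ≤ d → {c, d} ≤ m → S.ok c d = true

/-- The standard multisets of shape `K = (b, a)` and rank `j`. -/
def stdSet (K : ℕ × ℕ) (j : ℕ) : Set (Multiset (Fin n)) :=
  {m | S.Std m ∧ (m.map S.kind).sum = K ∧ (m.map S.rk).sum = j}

variable {R : Type*} [CommRing R] [Algebra ℚ R] (f : Fin n → R)

/-- The span of the monomials of shape `K` and rank `j` in the column functions `f`. -/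
def V (K : ℕ × ℕ) (j : ℤ) : Submodule ℚ R :=
  Submodule.span ℚ {x | ∃ m : Multiset (Fin n), (m.map S.kind).sum = K ∧
    (((m.map S.rk).sum : ℕ) : ℤ) = j ∧ (m.map f).prod = x}

lemma gen_mem_V (k : Fin n) : f k ∈ S.V f (S.kind k) (S.rk k) :=
  Submodule.subset_span ⟨{k}, by simp⟩

lemma mul_mem_V {K K' : ℕ × ℕ} {j j' : ℤ} {x y : R} (hx : x ∈ S.V f K j) (hy : y ∈ S.V f K' j') :
    x * y ∈ S.V f (K + K') (j + j') := by
  induction hx using Submodule.span_induction with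
  | mem x hx =>
    obtain ⟨m, rfl, rfl, rfl⟩ := hx
    induction hy using Submodule.span_induction with
    | mem y hy =>
      obtain ⟨m', rfl, rfl, rfl⟩ := hy
      exact Submodule.subset_span ⟨m + m', by simp⟩
    | zero => simp
    | add y z _ _ h1 h2 => rw [mul_add]; exact add_mem h1 h2
    | smul c y _ h => rw [mul_smul_comm]; exact Submodule.smul_mem _ _ h
  | zero => simp
  | add y z _ _ h1 h2 => rw [add_mul]; exact add_mem h1 h2
  | smul c y _ h => rw [smul_mul_assoc]; exact Submodule.smul_mem _ _ h

/-- A derivation that shifts the rank of every column by `s` shifts the rank of monomials by `s`. -/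
lemma derivation_mem_V (D : Derivation ℚ R R) (s : ℤ)
    (hD : ∀ k, D (f k) ∈ S.V f (S.kind k) (S.rk k + s)) {K : ℕ × ℕ} {j : ℤ} {x : R}
    (hx : x ∈ S.V f K j) : D x ∈ S.V f K (j + s) := by
  induction hx using Submodule.span_induction with
  | mem x hx =>
    obtain ⟨m, rfl, rfl, rfl⟩ := hx
    induction m using Multiset.induction with
    | empty => simp
    | cons k m ih =>
      simp only [Multiset.map_cons, Multiset.prod_cons, Multiset.sum_cons, Derivation.leibniz,
        smul_eq_mul, Nat.cast_add]
      refine add_mem ?_ ?_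
      · rw [add_assoc]
        exact S.mul_mem_V f (S.gen_mem_V f k) ih
      · rw [add_right_comm, mul_comm]
        exact S.mul_mem_V f (hD k) (Submodule.subset_span ⟨m, rfl, rfl, rfl⟩)
  | zero => simp
  | add y z _ _ h1 h2 => rw [map_add]; exact add_mem h1 h2
  | smul c y _ h => rw [Derivation.map_smul]; exact Submodule.smul_mem _ _ h

/-- The commutator of `E` and `F` acts on monomials of rank `j` by the scalar `2 j - l`. -/
lemma comm_V (E F : Derivation ℚ R R)
    (hEF : ∀ k, E (F (f k)) - F (E (f k)) =
      ((2 * S.rk k - ((S.kind k).1 * S.lD + (S.kind k).2 * S.lS : ℕ) : ℤ) : ℚ) • f k)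
    {K : ℕ × ℕ} {j : ℤ} {x : R} (hx : x ∈ S.V f K j) :
    E (F x) - F (E x) = ((2 * j - (K.1 * S.lD + K.2 * S.lS : ℕ) : ℤ) : ℚ) • x := by
  have key : ∀ x, E (F x) - F (E x) = ⁅E, F⁆ x := fun x => (Derivation.commutator_apply x).symm
  simp only [key] at hEF ⊢
  induction hx using Submodule.span_induction with
  | mem x hx =>
    obtain ⟨m, rfl, rfl, rfl⟩ := hx
    induction m using Multiset.induction with
    | empty => simp
    | cons k m ih =>
      simp only [Multiset.map_cons, Multiset.prod_cons, Multiset.sum_cons, Derivation.leibniz,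
        ih, hEF, Prod.fst_add, Prod.snd_add, smul_eq_mul, mul_smul_comm]
      rw [mul_comm (m.map f).prod, ← add_smul]
      congr 1
      push_cast
      ring
  | zero => simp
  | add y z _ _ h1 h2 => rw [map_add, h1, h2, smul_add]
  | smul c y _ h => rw [Derivation.map_smul, h, smul_comm]

/-- If every incompatible product of two columns is a combination of products of smaller weight
`wt`, then the standard monomials span. -/
lemma V_le_span_std (wt : Fin n → ℕ)
    (hst : ∀ c d, c ≤ d → S.ok c d = false → f c * f d ∈ Submodule.span ℚ
      {x | ∃ c' d', S.kind c' + S.kind d' = S.kind c + S.kind d ∧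
        S.rk c' + S.rk d' = S.rk c + S.rk d ∧ wt c' + wt d' < wt c + wt d ∧ f c' * f d' = x})
    (K : ℕ × ℕ) (j : ℕ) :
    S.V f K j ≤ Submodule.span ℚ
      (Set.range fun m : S.stdSet K j => ((m : Multiset (Fin n)).map f).prod) := by
  have key : ∀ (N : ℕ) (m : Multiset (Fin n)), (m.map wt).sum = N → (m.map S.kind).sum = K →
      (m.map S.rk).sum = j → (m.map f).prod ∈ Submodule.span ℚ
      (Set.range fun m : S.stdSet K j => ((m : Multiset (Fin n)).map f).prod) := by
    intro N
    induction N using Nat.strong_induction_on with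
    | _ N ih =>
      intro m hN hK hj
      by_cases hm : S.Std m
      · exact Submodule.subset_span ⟨⟨m, hm, hK, hj⟩, rfl⟩
      · simp only [Std, not_forall] at hm
        obtain ⟨c, d, hcd, hle, hok⟩ := hm
        obtain ⟨m', rfl⟩ := Multiset.le_iff_exists_add.mp hle
        have h1 := hst c d hcd (by simpa using hok)
        simp only [Multiset.map_add, Multiset.sum_add, Multiset.prod_add, Multiset.insert_eq_cons,
          Multiset.map_cons, Multiset.map_singleton, Multiset.sum_cons, Multiset.sum_singleton,
          Multiset.prod_cons, Multiset.prod_singleton] at hN hK hj ⊢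
        generalize f c * f d = y at h1
        induction h1 using Submodule.span_induction with
        | mem x hx =>
          obtain ⟨c', d', hk, hr, hw, rfl⟩ := hx
          have := ih ((({c', d'} + m' : Multiset (Fin n)).map wt).sum) (by simp; omega)
            ({c', d'} + m') rfl (by simpa [← add_assoc, hk] using hK) (by simp; omega)
          simpa [mul_assoc] using this
        | zero => simp
        | add y z _ _ h1 h2 => rw [add_mul]; exact add_mem h1 h2
        | smul c y _ h => rw [smul_mul_assoc]; exact Submodule.smul_mem _ _ h
  rw [V, Submodule.span_le]
  rintro x ⟨m, hK, hj, rfl⟩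
  exact key _ m rfl hK (by exact_mod_cast hj)

lemma card_eq_of_kind {m : Multiset (Fin n)} {K : ℕ × ℕ} (h : (m.map S.kind).sum = K) :
    m.card = K.1 + K.2 := by
  subst h
  induction m using Multiset.induction with
  | empty => simp
  | cons k m ih =>
    simp only [Multiset.card_cons, Multiset.map_cons, Multiset.sum_cons, ih, Prod.fst_add,
      Prod.snd_add]
    have : (S.kind k).1 + (S.kind k).2 = 1 := by unfold kind; split <;> rfl
    omega

lemma finite_kind (K : ℕ × ℕ) : {m : Multiset (Fin n) | (m.map S.kind).sum = K}.Finite := by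
  refine Set.Finite.subset (s := {m : Multiset (Fin n) | m.card = K.1 + K.2}) ?_
    fun m hm => S.card_eq_of_kind hm
  exact Set.toFinite (α := Multiset (Fin n)) (Set.range (fun s : Sym (Fin n) (K.1 + K.2) =>
    (s : Multiset (Fin n)))) |>.subset fun m hm => ⟨⟨m, hm⟩, rfl⟩

/-- The number of standard multisets of given shape is symmetric and unimodal in the rank, as
soon as they index a basis of the graded pieces of an sl₂-module. -/
theorem symm_unimodal (E F : Derivation ℚ R R)
    (hE : ∀ k, E (f k) ∈ S.V f (S.kind k) (S.rk k + 1))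
    (hF : ∀ k, F (f k) ∈ S.V f (S.kind k) (S.rk k + (-1)))
    (hEF : ∀ k, E (F (f k)) - F (E (f k)) =
      ((2 * S.rk k - ((S.kind k).1 * S.lD + (S.kind k).2 * S.lS : ℕ) : ℤ) : ℚ) • f k)
    (hrk : ∀ k, S.rk k ≤ (S.kind k).1 * S.lD + (S.kind k).2 * S.lS)
    (wt : Fin n → ℕ)
    (hst : ∀ c d, c ≤ d → S.ok c d = false → f c * f d ∈ Submodule.span ℚ
      {x | ∃ c' d', S.kind c' + S.kind d' = S.kind c + S.kind d ∧
        S.rk c' + S.rk d' = S.rk c + S.rk d ∧ wt c' + wt d' < wt c + wt d ∧ f c' * f d' = x})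
    {d : ℕ} (ψ : R →ₐ[ℚ] MvPolynomial (Fin d) ℚ) (ω : Fin d → ℕ) (ex : Fin n → Fin d → ℕ)
    (htop : ∀ k, TopMono (wtHom ω) (ψ (f k)) (Finsupp.equivFunOnFinite.symm (ex k)))
    (hinj : ∀ m m', S.Std m → S.Std m' → (m.map S.kind).sum = (m'.map S.kind).sum →
      (m.map ex).sum = (m'.map ex).sum → m = m')
    (K : ℕ × ℕ) (l : ℕ) (hl : l = K.1 * S.lD + K.2 * S.lS) :
    (∀ j, j ≤ l → (S.stdSet K j).ncard = (S.stdSet K (l - j)).ncard) ∧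
      (∀ i j, i ≤ j → j ≤ l / 2 → (S.stdSet K i).ncard ≤ (S.stdSet K j).ncard) := by
  subst hl
  have hbound : ∀ m : Multiset (Fin n), (m.map S.rk).sum ≤
      (m.map S.kind).sum.1 * S.lD + (m.map S.kind).sum.2 * S.lS := by
    intro m
    induction m using Multiset.induction with
    | empty => simp
    | cons k m ih =>
      have := hrk k
      simp only [Multiset.map_cons, Multiset.sum_cons, Prod.fst_add, Prod.snd_add, add_mul]
      omega
  refine sl2_symm_unimodal (S.V f K) E.toLinearMap F.toLinearMap _
    (fun j x hx => S.derivation_mem_V f E 1 hE hx)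
    (fun j x hx => S.derivation_mem_V f F (-1) hF hx)
    (fun j x hx => S.comm_V f E F hEF hx) ?_ ?_ ?_ _ ?_
  · intro j hj
    rw [V, Submodule.span_eq_bot]
    rintro x ⟨m, -, h, -⟩
    omega
  · intro j hj
    rw [V, Submodule.span_eq_bot]
    rintro x ⟨m, rfl, h, -⟩
    have := hbound m
    omega
  · intro j
    refine Module.Finite.span_of_finite ℚ (((S.finite_kind K).image
      fun m => (m.map f).prod).subset ?_)
    rintro x ⟨m, h, -, rfl⟩
    exact ⟨m, h, rfl⟩
  · intro j
    have hV : S.V f K j = Submodule.span ℚ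
        (Set.range fun m : S.stdSet K j => ((m : Multiset (Fin n)).map f).prod) := by
      refine le_antisymm (S.V_le_span_std f wt hst K j) ?_
      rw [Submodule.span_le]
      rintro _ ⟨⟨m, _, hK, hj⟩, rfl⟩
      exact Submodule.subset_span ⟨m, hK, by exact_mod_cast hj, rfl⟩
    have hli : LinearIndependent ℚ
        fun m : S.stdSet K j => ((m : Multiset (Fin n)).map f).prod := by
      refine LinearIndependent.of_comp ψ.toLinearMap ?_
      refine linearIndependent_of_top (ω := wtHom ω) (ex := fun m : S.stdSet K j =>
        ((m : Multiset (Fin n)).map fun k => Finsupp.equivFunOnFinite.symm (ex k)).sum) ?_ ?_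
      · intro m
        have := TopMono.multiset_prod htop (m : Multiset (Fin n))
        simpa [Function.comp_def, map_multiset_prod] using this
      · rintro ⟨m, hm, hK, hj⟩ ⟨m', hm', hK', hj'⟩ h
        refine Subtype.ext (hinj m m' hm hm' (hK.trans hK'.symm) ?_)
        have h2 : ∀ m : Multiset (Fin n), (m.map ex).sum =
            ⇑((m.map fun k => Finsupp.equivFunOnFinite.symm (ex k)).sum) := by
          intro m
          induction m using Multiset.induction with
          | empty => rfl
          | cons k m ih => simp [ih]
        rw [h2, h2]
        exact congrArg _ h
    have : Fintype (S.stdSet K j) :=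
      ((S.finite_kind K).subset fun m hm => hm.2.1).fintype
    rw [hV, finrank_span_eq_card hli, Set.ncard_eq_toFinset_card', Set.toFinset_card]

end ColSys

/-! ### Explicit tables of relations -/

namespace ColSys

variable {n : ℕ} (S : ColSys n) {R : Type*} [CommRing R] [Algebra ℚ R] (f : Fin n → R)

/-- The value of a formal integral linear combination of columns. -/
def lin (f : Fin n → R) (L : List (ℤ × Fin n)) : R := (L.map fun t => (t.1 : R) * f t.2).sum

/-- The value of a formal integral linear combination of products of two columns. -/
def quad (f : Fin n → R) (L : List (ℤ × Fin n × Fin n)) : R :=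
  (L.map fun t => (t.1 : R) * (f t.2.1 * f t.2.2)).sum

lemma lin_mem_V (L : List (ℤ × Fin n)) (K : ℕ × ℕ) (j : ℤ)
    (hL : ∀ t ∈ L, S.kind t.2 = K ∧ (S.rk t.2 : ℤ) = j) : lin f L ∈ S.V f K j := by
  induction L with
  | nil => simp [lin]
  | cons t L ih =>
    have h1 := ih fun t ht => hL t (by simp [ht])
    obtain ⟨h2, h3⟩ := hL t (by simp)
    have h4 := zsmul_mem (S.gen_mem_V f t.2) t.1
    rw [h2, h3, zsmul_eq_mul] at h4
    simpa [lin] using add_mem h4 h1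

/-- The coefficient of column `m` in a formal linear combination. -/
def coef (L : List (ℤ × Fin n)) (m : Fin n) : ℤ := (L.map fun t => if t.2 = m then t.1 else 0).sum

/-- Substitution of the formal linear combinations `M` into `L`. -/
def comp (L : List (ℤ × Fin n)) (M : Fin n → List (ℤ × Fin n)) : List (ℤ × Fin n) :=
  L.flatMap fun t => (M t.2).map fun s => (t.1 * s.1, s.2)

lemma lin_eq_sum_coef (L : List (ℤ × Fin n)) : lin f L = ∑ m, (coef L m : R) * f m := by
  induction L with
  | nil => simp [lin, coef]
  | cons t L ih =>
    have h1 : lin f (t :: L) = t.1 * f t.2 + lin f L := by simp [lin]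
    have h2 : ∀ m, coef (t :: L) m = (if t.2 = m then t.1 else 0) + coef L m := by
      intro m; simp [coef]
    simp [h1, h2, ih, add_mul, Finset.sum_add_distrib]

lemma derivation_lin (D : Derivation ℚ R R) (M : Fin n → List (ℤ × Fin n))
    (hD : ∀ k, D (f k) = lin f (M k)) (L : List (ℤ × Fin n)) :
    D (lin f L) = lin f (comp L M) := by
  induction L with
  | nil => simp [lin, comp]
  | cons t L ih =>
    have h1 : lin f (t :: L) = t.1 * f t.2 + lin f L := by simp [lin]
    have h2 : ∀ L₁ L₂, lin f (L₁ ++ L₂) = lin f L₁ + lin f L₂ := by simp [lin]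
    have h3 : ∀ (c : ℤ) L₁, lin f (L₁.map fun s => (c * s.1, s.2)) = c * lin f L₁ := by
      intro c L₁
      simp [lin, ← List.sum_map_mul_left, mul_assoc, Function.comp_def]
    have h4 : comp (t :: L) M = ((M t.2).map fun s => (t.1 * s.1, s.2)) ++ comp L M := by
      simp [comp]
    rw [h1, h4, h2, h3, map_add, ih, ← zsmul_eq_mul, map_zsmul, hD, zsmul_eq_mul]

/-- The commutation hypothesis of `symm_unimodal`, from the matrices of `E` and `F`. -/
lemma comm_of_table (E F : Derivation ℚ R R) (up down : Fin n → List (ℤ × Fin n))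
    (hE : ∀ k, E (f k) = lin f (up k)) (hF : ∀ k, F (f k) = lin f (down k))
    (h : ∀ k m, coef (comp (down k) up) m - coef (comp (up k) down) m =
      if k = m then 2 * (S.rk k : ℤ) - ((S.kind k).1 * S.lD + (S.kind k).2 * S.lS : ℕ) else 0)
    (k : Fin n) :
    E (F (f k)) - F (E (f k)) =
      ((2 * S.rk k - ((S.kind k).1 * S.lD + (S.kind k).2 * S.lS : ℕ) : ℤ) : ℚ) • f k := by
  rw [hE, hF, derivation_lin f E up hE, derivation_lin f F down hF, lin_eq_sum_coef,
    lin_eq_sum_coef, ← Finset.sum_sub_distrib, Int.cast_smul_eq_zsmul, zsmul_eq_mul]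
  have h1 : ∀ m, (coef (comp (down k) up) m : R) * f m - (coef (comp (up k) down) m : R) * f m =
      if k = m then ((2 * (S.rk k : ℤ) -
        ((S.kind k).1 * S.lD + (S.kind k).2 * S.lS : ℕ) : ℤ) : R) * f k else 0 := by
    intro m
    rw [← sub_mul, ← Int.cast_sub, h]
    split_ifs with hkm
    · subst hkm; rfl
    · simp
  simp only [h1, Finset.sum_ite_eq, Finset.mem_univ, if_true]

/-- The straightening hypothesis of `symm_unimodal`, from an explicit table of relations. -/
lemma straighten_of_table (wt : Fin n → ℕ)
    (T : List (Fin n × Fin n × List (ℤ × Fin n × Fin n)))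
    (hT : ∀ r ∈ T, f r.1 * f r.2.1 = quad f r.2.2)
    (hs : ∀ r ∈ T, ∀ t ∈ r.2.2, S.kind t.2.1 + S.kind t.2.2 = S.kind r.1 + S.kind r.2.1 ∧
      S.rk t.2.1 + S.rk t.2.2 = S.rk r.1 + S.rk r.2.1 ∧
      wt t.2.1 + wt t.2.2 < wt r.1 + wt r.2.1)
    (hcov : ∀ c d, c ≤ d → S.ok c d = false → ∃ r ∈ T, r.1 = c ∧ r.2.1 = d) :
    ∀ c d, c ≤ d → S.ok c d = false → f c * f d ∈ Submodule.span ℚ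
      {x | ∃ c' d', S.kind c' + S.kind d' = S.kind c + S.kind d ∧
        S.rk c' + S.rk d' = S.rk c + S.rk d ∧ wt c' + wt d' < wt c + wt d ∧
        f c' * f d' = x} := by
  intro c d hcd hok
  obtain ⟨r, hr, rfl, rfl⟩ := hcov c d hcd hok
  rw [hT r hr]
  have h := hs r hr
  generalize r.2.2 = L at h
  induction L with
  | nil => simp [quad]
  | cons t L ih =>
    have h1 := ih fun t ht => h t (by simp [ht])
    obtain ⟨h2, h3, h4⟩ := h t (by simp)
    have h5 := zsmul_mem (Submodule.subset_span (R := ℚ)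
      (s := {x | ∃ c' d', S.kind c' + S.kind d' = S.kind r.1 + S.kind r.2.1 ∧
        S.rk c' + S.rk d' = S.rk r.1 + S.rk r.2.1 ∧ wt c' + wt d' < wt r.1 + wt r.2.1 ∧
        f c' * f d' = x}) ⟨t.2.1, t.2.2, h2, h3, h4, rfl⟩) t.1
    rw [zsmul_eq_mul] at h5
    simpa [quad] using add_mem h5 h1

end ColSys

/-! ### Standard multisets and tableaux -/

section SortedTuples

variable {n : ℕ}

lemma monotone_ext {k : ℕ} {u v : Fin k → Fin n} (hu : Monotone u) (hv : Monotone v)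
    (h : Finset.univ.val.map u = Finset.univ.val.map v) : u = v := by
  have key : ∀ w : Fin k → Fin n, Finset.univ.val.map w = ↑(List.ofFn w) := by
    intro w
    simp [List.ofFn_eq_map]
  rw [key, key, Multiset.coe_eq_coe] at h
  exact List.ofFn_injective (h.eq_of_pairwise' hu.sortedLE_ofFn.pairwise hv.sortedLE_ofFn.pairwise)

lemma exists_monotone (m : Multiset (Fin n)) {k : ℕ} (hk : m.card = k) :
    ∃ u : Fin k → Fin n, Monotone u ∧ Finset.univ.val.map u = m := by
  have hlen : (m.sort (· ≤ ·)).length = k := by rw [Multiset.length_sort, hk]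
  subst hlen
  refine ⟨(m.sort (· ≤ ·)).get, ?_, ?_⟩
  · exact (m.pairwise_sort (· ≤ ·)).sortedLE.monotone_get
  · conv_rhs => rw [← Multiset.sort_eq m (· ≤ ·), ← List.ofFn_get (m.sort (· ≤ ·))]
    simp [List.ofFn_eq_map]

end SortedTuples

namespace ColSys

variable {n : ℕ} (S : ColSys n)

/-- Tableaux with `b` columns of length two and `a` columns of length one, as sorted tuples of
columns that are pairwise compatible. -/
def tab (a b : ℕ) : Set ((Fin b → Fin n) × (Fin a → Fin n)) :=
  {T | (∀ j, (T.1 j : ℕ) < S.p) ∧ (∀ i, S.p ≤ (T.2 i : ℕ)) ∧ Monotone T.1 ∧ Monotone T.2 ∧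
    (∀ j j', j < j' → S.ok (T.1 j) (T.1 j') = true) ∧
    (∀ i i', i < i' → S.ok (T.2 i) (T.2 i') = true) ∧
    ∀ j i, S.ok (T.1 j) (T.2 i) = true}

lemma std_map_iff {ι : Type*} [Fintype ι] (w : ι → Fin n) :
    S.Std (Finset.univ.val.map w) ↔
      ∀ i k, i ≠ k → w i ≤ w k → S.ok (w i) (w k) = true := by
  classical
  constructor
  · intro h i k hik hle
    refine h _ _ hle ?_
    have h1 : ({i, k} : Multiset ι) ≤ Finset.univ.val := by
      have : ({i, k} : Finset ι).val ≤ Finset.univ.val :=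
        Finset.val_le_iff.mpr (Finset.subset_univ _)
      rwa [Finset.insert_val, Multiset.ndinsert_of_notMem (by simpa using hik)] at this
    simpa using Multiset.map_le_map (f := w) h1
  · intro h c d hcd hle
    have hc : c ∈ Finset.univ.val.map w := Multiset.mem_of_le hle (by simp)
    obtain ⟨i, -, rfl⟩ := Multiset.mem_map.mp hc
    have hd : d ∈ (Finset.univ.val.map w).erase (w i) :=
      Multiset.mem_of_le (Multiset.erase_le_erase (w i) hle) (by simp)
    rw [← Multiset.map_erase_of_mem _ _ (Finset.mem_univ_val i)] at hd
    obtain ⟨k, hk, rfl⟩ := Multiset.mem_map.mp hd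
    exact h i k (fun hik => (Finset.univ.nodup.mem_erase_iff.mp hk).1 hik.symm) hcd

/-- Standard multisets of shape `(b, a)` correspond to tableaux. -/
lemma ncard_tab (a b r : ℕ) :
    {T ∈ S.tab a b | (∑ j, S.rk (T.1 j)) + ∑ i, S.rk (T.2 i) = r}.ncard =
      (S.stdSet (b, a) r).ncard := by
  classical
  have hsum : ∀ (T : (Fin b → Fin n) × (Fin a → Fin n)),
      Finset.univ.val.map (Sum.elim T.1 T.2) =
        Finset.univ.val.map T.1 + Finset.univ.val.map T.2 := by
    intro T
    rw [← Finset.univ_disjSum_univ, Finset.val_disjSum, Multiset.disjSum, Multiset.map_add,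
      Multiset.map_map, Multiset.map_map]
    rfl
  have hkind : ∀ m : Multiset (Fin n), (m.map S.kind).sum =
      ((m.filter fun k : Fin n => (k : ℕ) < S.p).card,
        (m.filter fun k : Fin n => ¬ (k : ℕ) < S.p).card) := by
    intro m
    induction m using Multiset.induction with
    | empty => rfl
    | cons k m ih =>
      by_cases hk : (k : ℕ) < S.p
      · simp [ih, kind, hk, add_comm]
      · simp [ih, kind, hk, not_lt.mp hk, add_comm]
  have hfilt : ∀ T ∈ S.tab a b,
      (Finset.univ.val.map (Sum.elim T.1 T.2)).filter (fun k : Fin n => (k : ℕ) < S.p) =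
        Finset.univ.val.map T.1 ∧
      (Finset.univ.val.map (Sum.elim T.1 T.2)).filter (fun k : Fin n => ¬ (k : ℕ) < S.p) =
        Finset.univ.val.map T.2 := by
    rintro T ⟨h1, h2, -⟩
    rw [hsum, Multiset.filter_add, Multiset.filter_add]
    constructor
    · rw [Multiset.filter_eq_self.mpr, Multiset.filter_eq_nil.mpr, add_zero]
      · simpa using h2
      · simpa using h1
    · rw [Multiset.filter_eq_nil.mpr, Multiset.filter_eq_self.mpr, zero_add]
      · simpa using h2
      · simpa using h1
  refine Set.ncard_congr (fun T _ => Finset.univ.val.map (Sum.elim T.1 T.2)) ?_ ?_ ?_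
  · rintro T ⟨hT, hr⟩
    refine ⟨?_, ?_, ?_⟩
    · obtain ⟨h1, h2, h3, h4, h5, h6, h7⟩ := hT
      rw [std_map_iff]
      rintro (j | i) (j' | i') hne hle
      · simp only [Sum.elim_inl] at hle ⊢
        rcases lt_or_gt_of_ne (fun h => hne (congrArg Sum.inl h) : j ≠ j') with h | h
        · exact h5 _ _ h
        · have h8 := h5 _ _ h
          have h9 := le_antisymm hle (h3 h.le)
          rwa [h9] at h8 ⊢
      · exact h7 _ _
      · have := h1 j'
        have := h2 i
        simp only [Sum.elim_inl, Sum.elim_inr, Fin.le_def] at hle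
        omega
      · simp only [Sum.elim_inr] at hle ⊢
        rcases lt_or_gt_of_ne (fun h => hne (congrArg Sum.inr h) : i ≠ i') with h | h
        · exact h6 _ _ h
        · have h8 := h6 _ _ h
          have h9 := le_antisymm hle (h4 h.le)
          rwa [h9] at h8 ⊢
    · rw [hkind, (hfilt T hT).1, (hfilt T hT).2]
      simp
    · rw [hsum, ← hr]
      simp [Finset.sum, Function.comp_def]
  · rintro T T' ⟨hT, -⟩ ⟨hT', -⟩ h
    have h1 := (hfilt T hT).1
    have h2 := (hfilt T hT).2
    rw [h, (hfilt T' hT').1] at h1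
    rw [h, (hfilt T' hT').2] at h2
    exact Prod.ext (monotone_ext hT.2.2.1 hT'.2.2.1 h1.symm)
      (monotone_ext hT.2.2.2.1 hT'.2.2.2.1 h2.symm)
  · rintro m ⟨hm, hK, hr⟩
    rw [hkind, Prod.mk.injEq] at hK
    obtain ⟨u, hu, hum⟩ := exists_monotone _ hK.1
    obtain ⟨v, hv, hvm⟩ := exists_monotone _ hK.2
    have hmeq : Finset.univ.val.map (Sum.elim u v) = m := by
      rw [hsum (u, v), hum, hvm, Multiset.filter_add_not]
    have hu' : ∀ j, (u j : ℕ) < S.p := by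
      intro j
      have : u j ∈ m.filter fun k : Fin n => (k : ℕ) < S.p := by
        rw [← hum]; exact Multiset.mem_map_of_mem _ (Finset.mem_univ_val j)
      exact (Multiset.mem_filter.mp this).2
    have hv' : ∀ i, S.p ≤ (v i : ℕ) := by
      intro i
      have : v i ∈ m.filter fun k : Fin n => ¬ (k : ℕ) < S.p := by
        rw [← hvm]; exact Multiset.mem_map_of_mem _ (Finset.mem_univ_val i)
      exact not_lt.mp (Multiset.mem_filter.mp this).2
    rw [← hmeq, std_map_iff] at hm
    refine ⟨(u, v), ⟨⟨hu', hv', hu, hv, ?_, ?_, ?_⟩, ?_⟩, hmeq⟩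
    · exact fun j j' h => hm (Sum.inl j) (Sum.inl j') (by simpa using h.ne) (hu h.le)
    · exact fun j j' h => hm (Sum.inr j) (Sum.inr j') (by simpa using h.ne) (hv h.le)
    · refine fun j i => hm (Sum.inl j) (Sum.inr i) (by simp) ?_
      have := hu' j
      have := hv' i
      simp only [Sum.elim_inl, Sum.elim_inr, Fin.le_def]
      omega
    · rw [← hr, ← hmeq, hsum (u, v)]
      simp [Finset.sum, Function.comp_def]

/-- Transport of the count of tableaux to fillings: `dc` and `sc` give the entries of the columns
of length two and one. -/
lemma ncard_fillings {a b : ℕ} (P : Set (TabT a b)) (rank : TabT a b → ℕ)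
    (dc : Fin n → ℕ × ℕ) (sc : Fin n → ℕ)
    (hdc : ∀ k k' : Fin n, (k : ℕ) < S.p → (k' : ℕ) < S.p → dc k = dc k' → k = k')
    (hsc : ∀ k k' : Fin n, S.p ≤ (k : ℕ) → S.p ≤ (k' : ℕ) → sc k = sc k' → k = k')
    (hP : ∀ u v, (∀ j, (u j : ℕ) < S.p) → (∀ i, S.p ≤ (v i : ℕ)) →
      ((dc ∘ u, sc ∘ v) ∈ P ↔ (u, v) ∈ S.tab a b))
    (hP₁ : ∀ T ∈ P, ∀ j, ∃ k : Fin n, (k : ℕ) < S.p ∧ dc k = T.1 j)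
    (hP₂ : ∀ T ∈ P, ∀ i, ∃ k : Fin n, S.p ≤ (k : ℕ) ∧ sc k = T.2 i)
    (hrank : ∀ u v, (u, v) ∈ S.tab a b →
      rank (dc ∘ u, sc ∘ v) = (∑ j, S.rk (u j)) + ∑ i, S.rk (v i)) (r : ℕ) :
    {T ∈ P | rank T = r}.ncard = (S.stdSet (b, a) r).ncard := by
  rw [← S.ncard_tab a b r]
  refine (Set.ncard_congr (fun T _ => (dc ∘ T.1, sc ∘ T.2)) ?_ ?_ ?_).symm
  · rintro ⟨u, v⟩ ⟨hT, hr⟩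
    exact ⟨(hP u v hT.1 hT.2.1).mpr hT, (hrank u v hT).trans hr⟩
  · rintro ⟨u, v⟩ ⟨u', v'⟩ ⟨hT, -⟩ ⟨hT', -⟩ h
    rw [Prod.mk.injEq] at h
    exact Prod.ext (funext fun j => hdc _ _ (hT.1 j) (hT'.1 j) (congrFun h.1 j))
      (funext fun i => hsc _ _ (hT.2.1 i) (hT'.2.1 i) (congrFun h.2 i))
  · rintro ⟨t, t'⟩ ⟨hT, hr⟩
    choose u hu hut using hP₁ _ hT
    choose v hv hvt using hP₂ _ hT
    obtain rfl : dc ∘ u = t := funext hut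
    obtain rfl : sc ∘ v = t' := funext hvt
    have := (hP u v hu hv).mp hT
    exact ⟨(u, v), ⟨this, (hrank u v this).symm.trans hr⟩, rfl⟩

end ColSys

namespace ColSys

variable {n : ℕ} (S : ColSys n)

lemma sum_map_eq_sum_count {M : Type*} [AddCommMonoid M] (m : Multiset (Fin n)) (g : Fin n → M) :
    (m.map g).sum = ∑ k, m.count k • g k := by
  rw [Finset.sum_multiset_map_count]
  refine Finset.sum_subset (Finset.subset_univ _) fun k _ hk => ?_
  rw [Multiset.count_eq_zero_of_notMem (by simpa using hk), zero_smul]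

/-- Compatibility of columns in terms of the multiplicities `x` of a multiset of columns. -/
def StdCount (x : Fin n → ℕ) : Prop :=
  (∀ c d, c < d → S.ok c d = false → x c = 0 ∨ x d = 0) ∧ ∀ c, S.ok c c = false → x c ≤ 1

lemma Std.count {m : Multiset (Fin n)} (h : S.Std m) : S.StdCount (m.count ·) := by
  constructor
  · intro c d hcd hok
    by_contra! hne
    have h1 : ({c, d} : Multiset (Fin n)) ≤ m := by
      rw [Multiset.le_iff_count]
      intro k
      rw [Multiset.insert_eq_cons, Multiset.count_cons, Multiset.count_singleton]
      have := hne.1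
      have := hne.2
      split_ifs with h1 h2 h2
      · exact absurd (h1.symm.trans h2) hcd.ne'
      · subst h1; omega
      · subst h2; omega
      · omega
    simp [h c d hcd.le h1] at hok
  · intro c hok
    by_contra! hne
    have h1 : ({c, c} : Multiset (Fin n)) ≤ m := by
      rw [show ({c, c} : Multiset (Fin n)) = Multiset.replicate 2 c from rfl,
        ← Multiset.le_count_iff_replicate_le]
      exact hne
    simp [h c c le_rfl h1] at hok

/-- The separation hypothesis of `symm_unimodal`, in terms of multiplicities. -/
lemma inj_of_count {d : ℕ} (ex : Fin n → Fin d → ℕ)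
    (h : ∀ x y : Fin n → ℕ, S.StdCount x → S.StdCount y →
      ∑ k, x k • S.kind k = ∑ k, y k • S.kind k → ∑ k, x k • ex k = ∑ k, y k • ex k → x = y) :
    ∀ m m', S.Std m → S.Std m' → (m.map S.kind).sum = (m'.map S.kind).sum →
      (m.map ex).sum = (m'.map ex).sum → m = m' := by
  intro m m' hm hm' hk he
  rw [sum_map_eq_sum_count, sum_map_eq_sum_count] at hk he
  exact Multiset.ext.mpr (congrFun (h _ _ (Std.count S hm) (Std.count S hm') hk he))

end ColSys

/-! ### Type A₂ -/

section TypeA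

open MvPolynomial

/-- Columns `12, 13, 23` followed by `1, 2, 3`. -/
def A2sys : ColSys 6 where
  p := 3
  rk := ![2, 1, 0, 2, 1, 0]
  lD := 2
  lS := 2
  ok c d := !(![[], [], [3], [], [], []] c : List (Fin 6)).contains d

/-- The column functions on the open cell with coordinates `a, b, w`; `X` and `Y` record the
shape. -/
def fA2 {R : Type*} [CommRing R] (X Y a b w : R) : Fin 6 → R :=
  ![Y, Y * w, Y * (a * w - b), X, X * a, X * b]

/-- The column functions as polynomials. -/
noncomputable def gA2 : Fin 6 → MvPolynomial (Fin 5) ℚ := fA2 (X 0) (X 1) (X 2) (X 3) (X 4)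

/-- The raising operator. -/
noncomputable def eA2 : Derivation ℚ (MvPolynomial (Fin 5) ℚ) (MvPolynomial (Fin 5) ℚ) :=
  mkDerivation ℚ ![0, 0, 1, X 2, 1]

/-- The lowering operator. -/
noncomputable def hA2 : Derivation ℚ (MvPolynomial (Fin 5) ℚ) (MvPolynomial (Fin 5) ℚ) :=
  mkDerivation ℚ ![2 * X 0 * X 2, 2 * X 1 * X 4, 2 * X 3 - 2 * X 2 ^ 2, -2 * X 2 * X 3,
    2 * (X 2 * X 4 - X 3) - 2 * X 4 ^ 2]

/-- The action of the raising operator on columns. -/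
def upA2 : Fin 6 → List (ℤ × Fin 6) := ![[], [(1, 0)], [(1, 1)], [], [(1, 3)], [(1, 4)]]

/-- The action of the lowering operator on columns. -/
def downA2 : Fin 6 → List (ℤ × Fin 6) := ![[(2, 1)], [(2, 2)], [], [(2, 4)], [(2, 5)], []]

lemma eA2_apply (k : Fin 6) : eA2 (gA2 k) = ColSys.lin gA2 (upA2 k) := by
  fin_cases k <;>
    simp [eA2, gA2, fA2, upA2, ColSys.lin, Derivation.leibniz, mkDerivation_X]

lemma hA2_apply (k : Fin 6) : hA2 (gA2 k) = ColSys.lin gA2 (downA2 k) := by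
  fin_cases k <;>
    simp [hA2, gA2, fA2, downA2, ColSys.lin, Derivation.leibniz, mkDerivation_X] <;> ring

/-- The straightening relation. -/
def relA2 : List (Fin 6 × Fin 6 × List (ℤ × Fin 6 × Fin 6)) :=
  [(2, 3, [(1, 1, 4), (-1, 0, 5)])]

/-- The exponents of the leading monomials of the column functions in `a, b, w`. -/
def exA2 : Fin 6 → Fin 3 → ℕ :=
  ![![0, 0, 0], ![0, 0, 1], ![1, 0, 1], ![0, 0, 0], ![1, 0, 0], ![0, 1, 0]]

/-- The remaining terms of the column functions. -/
def restA2 : Fin 6 → List (ℤ × (Fin 3 → ℕ)) := ![[], [], [(-1, ![0, 1, 0])], [], [], []]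

/-- The specialisation of the shape variables to `1`. -/
noncomputable def psiA2 : MvPolynomial (Fin 5) ℚ →ₐ[ℚ] MvPolynomial (Fin 3) ℚ :=
  aeval ![1, 1, X 0, X 1, X 2]

lemma psiA2_apply (k : Fin 6) : psiA2 (gA2 k) = polyOf ((1, exA2 k) :: restA2 k) := by
  fin_cases k <;> simp [psiA2, gA2, fA2, polyOf, exA2, restA2, Fin.prod_univ_three] <;> ring

/-- The leading monomials determine the multiplicities of a standard multiset of given shape. -/
lemma inj_A2 (x y : Fin 6 → ℕ) (hx : A2sys.StdCount x) (hy : A2sys.StdCount y)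
    (hk : ∑ k, x k • A2sys.kind k = ∑ k, y k • A2sys.kind k)
    (he : ∑ k, x k • exA2 k = ∑ k, y k • exA2 k) : x = y := by
  have h1 := hx.1 2 3 (by decide) (by decide)
  have h2 := hy.1 2 3 (by decide) (by decide)
  have e0 := congrFun he 0
  have e1 := congrFun he 1
  have e2 := congrFun he 2
  simp [Fin.sum_univ_six, exA2] at e0 e1 e2
  simp [Fin.sum_univ_six, ColSys.kind, A2sys] at hk
  funext k
  fin_cases k <;> simp <;> omega

theorem A2_symm_unimodal (a b : ℕ) :
    (∀ j, j ≤ 2 * a + 2 * b → (A2sys.stdSet (b, a) j).ncard =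
      (A2sys.stdSet (b, a) (2 * a + 2 * b - j)).ncard) ∧
    (∀ i j, i ≤ j → j ≤ (2 * a + 2 * b) / 2 →
      (A2sys.stdSet (b, a) i).ncard ≤ (A2sys.stdSet (b, a) j).ncard) := by
  refine A2sys.symm_unimodal gA2 eA2 hA2 ?_ ?_
    (A2sys.comm_of_table gA2 _ _ upA2 downA2 eA2_apply hA2_apply (by decide)) (by decide)
    ![0, 1, 2, 0, 0, 0]
    (A2sys.straighten_of_table gA2 _ relA2 ?_ (by decide) (by decide))
    psiA2 ![1, 1, 1] exA2 ?_ (A2sys.inj_of_count _ inj_A2) (b, a) _ (by simp [A2sys]; ring)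
  · intro k
    rw [eA2_apply]
    exact A2sys.lin_mem_V _ _ _ _ (by revert k; decide)
  · intro k
    rw [hA2_apply]
    exact A2sys.lin_mem_V _ _ _ _ (by revert k; decide)
  · simp [relA2, ColSys.quad, gA2, fA2]
    ring
  · intro k
    rw [psiA2_apply]
    refine top_polyOf _ _ _ _ ?_ ?_
    · revert k; decide
    · revert k; decide

/-- The columns of length two. -/
def dcA2 : Fin 6 → ℕ × ℕ := ![(1, 2), (1, 3), (2, 3), 0, 0, 0]

/-- The columns of length one. -/
def scA2 : Fin 6 → ℕ := ![0, 0, 0, 1, 2, 3]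

lemma ncard_A2 (a b r : ℕ) : NA2 a b r = (A2sys.stdSet (b, a) r).ncard := by
  have hle : ∀ k k' : Fin 6, (k : ℕ) < 3 → (k' : ℕ) < 3 →
      (k ≤ k' ↔ (dcA2 k).1 ≤ (dcA2 k').1 ∧ (dcA2 k).2 ≤ (dcA2 k').2) := by decide
  have hle' : ∀ k k' : Fin 6, 3 ≤ (k : ℕ) → 3 ≤ (k' : ℕ) →
      (k ≤ k' ↔ scA2 k ≤ scA2 k') := by decide
  have hok : ∀ k k' : Fin 6, (k : ℕ) < 3 → (k' : ℕ) < 3 → A2sys.ok k k' = true := by decide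
  have hok' : ∀ k k' : Fin 6, 3 ≤ (k : ℕ) → 3 ≤ (k' : ℕ) → A2sys.ok k k' = true := by decide
  have hds : ∀ k k' : Fin 6, (k : ℕ) < 3 → 3 ≤ (k' : ℕ) →
      (A2sys.ok k k' = true ↔ (dcA2 k).1 ≤ scA2 k') := by decide
  refine A2sys.ncard_fillings (SA2 a b) rA2 dcA2 scA2 (by decide) (by decide) ?_ ?_ ?_ ?_ r
  · intro u v (hu : ∀ j, (u j : ℕ) < 3) (hv : ∀ i, 3 ≤ (v i : ℕ))
    constructor
    · rintro ⟨-, -, h3, h4, h5⟩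
      exact ⟨hu, hv, fun j j' h => (hle _ _ (hu j) (hu j')).mpr (h3 j j' h),
        fun i i' h => (hle' _ _ (hv i) (hv i')).mpr (h4 i i' h),
        fun j j' _ => hok _ _ (hu j) (hu j'), fun i i' _ => hok' _ _ (hv i) (hv i'),
        fun j i => (hds _ _ (hu j) (hv i)).mpr (h5 j i)⟩
    · rintro ⟨-, -, h3, h4, -, -, h7⟩
      refine ⟨fun j => ?_, fun i => ?_, fun j j' h => (hle _ _ (hu j) (hu j')).mp (h3 h),
        fun i i' h => (hle' _ _ (hv i) (hv i')).mp (h4 h),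
        fun j i => (hds _ _ (hu j) (hv i)).mp (h7 j i)⟩
      · have : ∀ k : Fin 6, (k : ℕ) < 3 → 1 ≤ (dcA2 k).1 ∧ (dcA2 k).1 ≤ 3 ∧ 1 ≤ (dcA2 k).2 ∧
            (dcA2 k).2 ≤ 3 ∧ (dcA2 k).1 < (dcA2 k).2 := by decide
        exact this _ (hu j)
      · have : ∀ k : Fin 6, 3 ≤ (k : ℕ) → 1 ≤ scA2 k ∧ scA2 k ≤ 3 := by decide
        exact this _ (hv i)
  · rintro T ⟨h, -⟩ j
    obtain ⟨h1, h2, h3, h4, h5⟩ := h j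
    generalize T.1 j = c at *
    obtain ⟨x, y⟩ := c
    dsimp only at *
    interval_cases x <;> interval_cases y <;> first | omega | decide
  · rintro T ⟨-, h, -⟩ i
    obtain ⟨h1, h2⟩ := h i
    generalize T.2 i = x at *
    interval_cases x <;> decide
  · rintro u v ⟨hu, hv, -⟩
    have h1 : ∀ k : Fin 6, (k : ℕ) < 3 → (2 - (dcA2 k).1) + (3 - (dcA2 k).2) = A2sys.rk k := by
      decide
    have h2 : ∀ k : Fin 6, 3 ≤ (k : ℕ) → 3 - scA2 k = A2sys.rk k := by decide
    exact congrArg₂ (· + ·) (Finset.sum_congr rfl fun j _ => h1 _ (hu j))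
      (Finset.sum_congr rfl fun i _ => h2 _ (hv i))

end TypeA

/-! ### Type C₂ -/

section TypeC

open MvPolynomial

/-- Columns `12, 13, 23, 24, 34` followed by `1, 2, 3, 4`. -/
def C2sys : ColSys 9 where
  p := 5
  rk := ![4, 3, 2, 1, 0, 3, 2, 1, 0]
  lD := 4
  lS := 3
  ok c d := !(![[], [], [2, 5], [5], [5, 6], [], [], [], []] c : List (Fin 9)).contains d

/-- The column functions on the open cell of the flag variety of `Sp₄`, with coordinates
`a, b, c, w`; `X` and `Y` record the shape. -/
def fC2 {R : Type*} [CommRing R] (X Y a b c w : R) : Fin 9 → R :=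
  ![Y, Y * w, Y * (a * w - b), Y * (a * (a * w - b) - c), Y * (b * (a * w - b) - c * w),
    X, X * a, X * b, X * c]

/-- The column functions as polynomials. -/
noncomputable def gC2 : Fin 9 → MvPolynomial (Fin 6) ℚ :=
  fC2 (X 0) (X 1) (X 2) (X 3) (X 4) (X 5)

/-- The raising operator. -/
noncomputable def eC2 : Derivation ℚ (MvPolynomial (Fin 6) ℚ) (MvPolynomial (Fin 6) ℚ) :=
  mkDerivation ℚ ![0, 0, 1, X 2, X 3, 1]

/-- The lowering operator. -/
noncomputable def hC2 : Derivation ℚ (MvPolynomial (Fin 6) ℚ) (MvPolynomial (Fin 6) ℚ) :=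
  mkDerivation ℚ ![3 * X 0 * X 2, 4 * X 1 * X 5, 4 * X 3 - 3 * X 2 ^ 2,
    3 * X 4 - 3 * X 2 * X 3, -3 * X 2 * X 4, 6 * (X 2 * X 5 - X 3) - 4 * X 5 ^ 2]

/-- The action of the raising operator on columns. -/
def upC2 : Fin 9 → List (ℤ × Fin 9) :=
  ![[], [(1, 0)], [(1, 1)], [(2, 2)], [(1, 3)], [], [(1, 5)], [(1, 6)], [(1, 7)]]

/-- The action of the lowering operator on columns. -/
def downC2 : Fin 9 → List (ℤ × Fin 9) :=
  ![[(4, 1)], [(6, 2)], [(3, 3)], [(4, 4)], [], [(3, 6)], [(4, 7)], [(3, 8)], []]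

lemma eC2_apply (k : Fin 9) : eC2 (gC2 k) = ColSys.lin gC2 (upC2 k) := by
  fin_cases k <;>
    simp [eC2, gC2, fC2, upC2, ColSys.lin, Derivation.leibniz, mkDerivation_X] <;> ring

lemma hC2_apply (k : Fin 9) : hC2 (gC2 k) = ColSys.lin gC2 (downC2 k) := by
  fin_cases k <;>
    simp [hC2, gC2, fC2, downC2, ColSys.lin, Derivation.leibniz, mkDerivation_X] <;> ring

/-- The straightening relations: the product of each incompatible pair of columns as a combination
of compatible products. -/
def relC2 : List (Fin 9 × Fin 9 × List (ℤ × Fin 9 × Fin 9)) :=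
  [(2, 2, [(1, 1, 3), (-1, 0, 4)]), (2, 5, [(1, 1, 6), (-1, 0, 7)]),
    (3, 5, [(1, 2, 6), (-1, 0, 8)]), (4, 5, [(1, 2, 7), (-1, 1, 8)]),
    (4, 6, [(1, 3, 7), (-1, 2, 8)])]

lemma relC2_spec {R : Type*} [CommRing R] (X Y a b c w : R) :
    ∀ r ∈ relC2, fC2 X Y a b c w r.1 * fC2 X Y a b c w r.2.1 =
      ColSys.quad (fC2 X Y a b c w) r.2.2 := by
  simp only [relC2, List.forall_mem_cons, List.not_mem_nil, false_imp_iff, implies_true, and_true]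
  refine ⟨?_, ?_, ?_, ?_, ?_⟩ <;> simp [ColSys.quad, fC2] <;> ring

/-- The exponents of the leading monomials of the column functions in `a, b, c, w`. -/
def exC2 : Fin 9 → Fin 4 → ℕ :=
  ![![0, 0, 0, 0], ![0, 0, 0, 1], ![1, 0, 0, 1], ![2, 0, 0, 1], ![0, 0, 1, 1],
    ![0, 0, 0, 0], ![1, 0, 0, 0], ![0, 1, 0, 0], ![0, 0, 1, 0]]

/-- The remaining terms of the column functions. -/
def restC2 : Fin 9 → List (ℤ × (Fin 4 → ℕ)) :=
  ![[], [], [(-1, ![0, 1, 0, 0])], [(-1, ![1, 1, 0, 0]), (-1, ![0, 0, 1, 0])],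
    [(1, ![1, 1, 0, 1]), (-1, ![0, 2, 0, 0])], [], [], [], []]

/-- The specialisation of the shape variables to `1`. -/
noncomputable def psiC2 : MvPolynomial (Fin 6) ℚ →ₐ[ℚ] MvPolynomial (Fin 4) ℚ :=
  aeval ![1, 1, X 0, X 1, X 2, X 3]

lemma psiC2_apply (k : Fin 9) :
    psiC2 (gC2 k) = polyOf (((![1, 1, 1, 1, -1, 1, 1, 1, 1] : Fin 9 → ℤ) k, exC2 k) ::
      restC2 k) := by
  fin_cases k <;> simp [psiC2, gC2, fC2, polyOf, exC2, restC2, Fin.prod_univ_four] <;> ring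

/-- The leading monomials determine the multiplicities of a standard multiset of given shape. -/
lemma inj_C2 (x y : Fin 9 → ℕ) (hx : C2sys.StdCount x) (hy : C2sys.StdCount y)
    (hk : ∑ k, x k • C2sys.kind k = ∑ k, y k • C2sys.kind k)
    (he : ∑ k, x k • exC2 k = ∑ k, y k • exC2 k) : x = y := by
  have hx1 := hx.2 2 (by decide)
  have hx2 := hx.1 2 5 (by decide) (by decide)
  have hx3 := hx.1 3 5 (by decide) (by decide)
  have hx4 := hx.1 4 5 (by decide) (by decide)
  have hx5 := hx.1 4 6 (by decide) (by decide)
  have hy1 := hy.2 2 (by decide)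
  have hy2 := hy.1 2 5 (by decide) (by decide)
  have hy3 := hy.1 3 5 (by decide) (by decide)
  have hy4 := hy.1 4 5 (by decide) (by decide)
  have hy5 := hy.1 4 6 (by decide) (by decide)
  have e0 := congrFun he 0
  have e1 := congrFun he 1
  have e2 := congrFun he 2
  have e3 := congrFun he 3
  simp only [Finset.sum_apply, Pi.smul_apply, smul_eq_mul, Fin.sum_univ_succ] at e0 e1 e2 e3
  simp [exC2] at e0 e1 e2 e3
  simp [Fin.sum_univ_succ, ColSys.kind, C2sys] at hk
  have h4 : x 4 = y 4 := by omega
  have h2 : x 2 = y 2 := by omega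
  funext k
  fin_cases k <;> simp <;> omega

theorem C2_symm_unimodal (a b : ℕ) :
    (∀ j, j ≤ 3 * a + 4 * b → (C2sys.stdSet (b, a) j).ncard =
      (C2sys.stdSet (b, a) (3 * a + 4 * b - j)).ncard) ∧
    (∀ i j, i ≤ j → j ≤ (3 * a + 4 * b) / 2 →
      (C2sys.stdSet (b, a) i).ncard ≤ (C2sys.stdSet (b, a) j).ncard) := by
  refine C2sys.symm_unimodal gC2 eC2 hC2 ?_ ?_
    (C2sys.comm_of_table gC2 _ _ upC2 downC2 eC2_apply hC2_apply (by decide +kernel))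
    (by decide) (![6, 9, 10, 9, 6, 7, 5, 0, 0])
    (C2sys.straighten_of_table gC2 _ relC2 (relC2_spec _ _ _ _ _ _) (by decide +kernel)
      (by decide +kernel))
    psiC2 ![3, 1, 6, 5] exC2 ?_ (C2sys.inj_of_count _ inj_C2) (b, a) _ (by simp [C2sys]; ring)
  · intro k
    rw [eC2_apply]
    exact C2sys.lin_mem_V _ _ _ _ (by revert k; decide)
  · intro k
    rw [hC2_apply]
    exact C2sys.lin_mem_V _ _ _ _ (by revert k; decide)
  · intro k
    rw [psiC2_apply]
    refine top_polyOf _ _ _ _ ?_ ?_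
    · revert k; decide
    · revert k; decide +kernel

/-- The columns of length two. -/
def dcC2 : Fin 9 → ℕ × ℕ := ![(1, 2), (1, 3), (2, 3), (2, 4), (3, 4), 0, 0, 0, 0]

/-- The columns of length one. -/
def scC2 : Fin 9 → ℕ := ![0, 0, 0, 0, 0, 1, 2, 3, 4]

lemma ncard_C2 (a b r : ℕ) : NC2 a b r = (C2sys.stdSet (b, a) r).ncard := by
  have hle : ∀ k k' : Fin 9, (k : ℕ) < 5 → (k' : ℕ) < 5 →
      (k ≤ k' ↔ (dcC2 k).1 ≤ (dcC2 k').1 ∧ (dcC2 k).2 ≤ (dcC2 k').2) := by decide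
  have hle' : ∀ k k' : Fin 9, 5 ≤ (k : ℕ) → 5 ≤ (k' : ℕ) →
      (k ≤ k' ↔ scC2 k ≤ scC2 k') := by decide
  have hok : ∀ k k' : Fin 9, (k : ℕ) < 5 → (k' : ℕ) < 5 →
      (C2sys.ok k k' = true ↔ ¬ (dcC2 k = (2, 3) ∧ dcC2 k' = (2, 3))) := by decide
  have hok' : ∀ k k' : Fin 9, 5 ≤ (k : ℕ) → 5 ≤ (k' : ℕ) → C2sys.ok k k' = true := by decide
  have hds : ∀ k k' : Fin 9, (k : ℕ) < 5 → 5 ≤ (k' : ℕ) →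
      (C2sys.ok k k' = true ↔ (dcC2 k).1 ≤ scC2 k') := by decide
  refine C2sys.ncard_fillings (SC2 a b) rC2 dcC2 scC2 (by decide) (by decide) ?_ ?_ ?_ ?_ r
  · intro u v (hu : ∀ j, (u j : ℕ) < 5) (hv : ∀ i, 5 ≤ (v i : ℕ))
    constructor
    · rintro ⟨-, -, h3, h4, h5, -, h7⟩
      exact ⟨hu, hv, fun j j' h => (hle _ _ (hu j) (hu j')).mpr (h3 j j' h),
        fun i i' h => (hle' _ _ (hv i) (hv i')).mpr (h4 i i' h),
        fun j j' h => (hok _ _ (hu j) (hu j')).mpr fun hjj => h.ne (h7 j j' hjj.1 hjj.2),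
        fun i i' _ => hok' _ _ (hv i) (hv i'),
        fun j i => (hds _ _ (hu j) (hv i)).mpr (h5 j i)⟩
    · rintro ⟨-, -, h3, h4, h5, -, h7⟩
      refine ⟨fun j => ?_, fun i => ?_, fun j j' h => (hle _ _ (hu j) (hu j')).mp (h3 h),
        fun i i' h => (hle' _ _ (hv i) (hv i')).mp (h4 h),
        fun j i => (hds _ _ (hu j) (hv i)).mp (h7 j i), fun j => ?_, fun j j' hj hj' => ?_⟩
      · have : ∀ k : Fin 9, (k : ℕ) < 5 → 1 ≤ (dcC2 k).1 ∧ (dcC2 k).1 ≤ 4 ∧ 1 ≤ (dcC2 k).2 ∧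
            (dcC2 k).2 ≤ 4 ∧ (dcC2 k).1 < (dcC2 k).2 := by decide
        exact this _ (hu j)
      · have : ∀ k : Fin 9, 5 ≤ (k : ℕ) → 1 ≤ scC2 k ∧ scC2 k ≤ 4 := by decide
        exact this _ (hv i)
      · have : ∀ k : Fin 9, (k : ℕ) < 5 → dcC2 k ≠ (1, 4) := by decide
        exact this _ (hu j)
      · rcases lt_trichotomy j j' with h | h | h
        · exact absurd ⟨hj, hj'⟩ ((hok _ _ (hu j) (hu j')).mp (h5 j j' h))
        · exact h
        · exact absurd ⟨hj', hj⟩ ((hok _ _ (hu j') (hu j)).mp (h5 j' j h))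
  · rintro T ⟨h, -, -, -, -, h', -⟩ j
    obtain ⟨h1, h2, h3, h4, h5⟩ := h j
    have h6 := h' j
    generalize T.1 j = c at *
    obtain ⟨x, y⟩ := c
    dsimp only at *
    interval_cases x <;> interval_cases y <;> first | omega | decide | exact absurd rfl h6
  · rintro T ⟨-, h, -⟩ i
    obtain ⟨h1, h2⟩ := h i
    generalize T.2 i = x at *
    interval_cases x <;> decide
  · rintro u v ⟨hu, hv, -⟩
    have h1 : ∀ k : Fin 9, (k : ℕ) < 5 → (3 - (dcC2 k).1) + (4 - (dcC2 k).2) = C2sys.rk k := by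
      decide
    have h2 : ∀ k : Fin 9, 5 ≤ (k : ℕ) → 4 - scC2 k = C2sys.rk k := by decide
    exact congrArg₂ (· + ·) (Finset.sum_congr rfl fun j _ => h1 _ (hu j))
      (Finset.sum_congr rfl fun i _ => h2 _ (hv i))

end TypeC

/-! ### Type G₂ -/

section TypeG

open MvPolynomial

/-- The columns `12, 13, 14, 15, 16, 17, 25, 26, 27, 36, 37, 47, 57, 67`, numbered `0` to `13`,
followed by the columns `1, ..., 7`, numbered `14` to `20`. The table lists, for every column, the
later columns that it is incompatible with. -/
def G2sys : ColSys 21 where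
  p := 14
  rk := ![10, 9, 8, 7, 6, 5, 6, 5, 4, 4, 3, 2, 1, 0, 6, 5, 4, 3, 2, 1, 0]
  lD := 10
  lS := 6
  ok c d := !(![
    [], [], [2, 3, 4, 5, 14], [3, 4, 5, 14], [4, 5, 6, 7, 8, 14, 15],
    [5, 6, 7, 8, 9, 10, 11, 14, 15, 16, 17], [14], [7, 8, 14, 15],
    [8, 9, 10, 11, 14, 15, 16, 17], [14, 15], [10, 11, 14, 15, 16, 17], [11, 14, 15, 16, 17],
    [14, 15, 16, 17], [14, 15, 16, 17, 18], [], [], [], [17], [], [], []] c :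
    List (Fin 21)).contains d

/-- The column functions on the open cell of the flag variety of `G₂`, with coordinates
`a, b, c, d, e, w`: the entries of a highest weight orbit vector of the seven-dimensional
representation and fourteen of its Plücker coordinates. `X` and `Y` record the shape. -/
def fG2 {R : Type*} [CommRing R] (X Y a b c d e w : R) : Fin 21 → R :=
  ![Y,
    Y * w,
    Y * (a * w - b),
    Y * (a ^ 2 * w - c - a * b),
    Y * (a * b * w - c * w - b ^ 2),
    Y * (e + a * c * w - d * w - b * c),
    Y * (a ^ 3 * w - d - a * c - a ^ 2 * b),
    Y * (a ^ 2 * b * w - e - a * c * w - a * b ^ 2),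
    Y * (b * d + a ^ 2 * c * w - c ^ 2 - a * d * w - a * b * c),
    Y * (a * b ^ 2 * w - e * w - b * c * w - b ^ 3),
    Y * (b * e + a * b * c * w - c ^ 2 * w - b ^ 2 * c - a * e * w),
    Y * (c * e + a * b * e + a * b * d * w - c * d * w - b ^ 2 * d - a ^ 2 * e * w),
    Y * (d * e + c ^ 3 + a * c * e + a * c * d * w + a * b * c ^ 2 + a ^ 2 * b * e
      + a ^ 2 * b * d * w - d ^ 2 * w - 2 * b * c * d - a * b ^ 2 * d - a ^ 2 * c ^ 2 * w
      - a ^ 3 * e * w),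
    Y * (e ^ 2 + c ^ 3 * w + b ^ 2 * c ^ 2 + 2 * a * c * e * w + a * b ^ 2 * e
      + a * b ^ 2 * d * w - d * e * w - b * c * e - b * c * d * w - b ^ 3 * d - a * b * c ^ 2 * w
      - a ^ 2 * b * e * w),
    X,
    X * a,
    X * b,
    X * c,
    X * d,
    X * e,
    X * (c ^ 2 + a * e - b * d)]

/-- The column functions as polynomials. -/
noncomputable def gG2 : Fin 21 → MvPolynomial (Fin 8) ℚ :=
  fG2 (X 0) (X 1) (X 2) (X 3) (X 4) (X 5) (X 6) (X 7)

/-- The raising operator. -/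
noncomputable def eG2 : Derivation ℚ (MvPolynomial (Fin 8) ℚ) (MvPolynomial (Fin 8) ℚ) :=
  mkDerivation ℚ ![0, 0, 1, X 2, X 3, 2 * X 4, X 5, 1]

/-- The lowering operator. -/
noncomputable def hG2 : Derivation ℚ (MvPolynomial (Fin 8) ℚ) (MvPolynomial (Fin 8) ℚ) :=
  mkDerivation ℚ ![
    6 * X 0 * X 2, 10 * X 1 * X 7, 10 * X 3 - 6 * X 2 ^ 2, 12 * X 4 - 6 * X 2 * X 3,
    6 * X 5 - 6 * X 2 * X 4, 10 * X 6 - 6 * X 2 * X 5, 6 * X 4 ^ 2 - 6 * X 3 * X 5,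
    18 * X 2 * X 7 - 18 * X 3 - 10 * X 7 ^ 2]

/-- The action of the raising operator on columns. -/
def upG2 : Fin 21 → List (ℤ × Fin 21) :=
  ![[], [(1, 0)], [(1, 1)], [(2, 2)], [(1, 3)], [(1, 4)], [(3, 3)], [(1, 4), (1, 6)],
    [(1, 5), (1, 7)], [(1, 5), (2, 7)], [(1, 8), (1, 9)], [(2, 10)], [(3, 11)], [(1, 12)], [],
    [(1, 14)], [(1, 15)], [(1, 16)], [(2, 17)], [(1, 18)], [(1, 19)]]

/-- The action of the lowering operator on columns. -/
def downG2 : Fin 21 → List (ℤ × Fin 21) :=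
  ![[(10, 1)], [(18, 2)], [(12, 3)], [(10, 4), (6, 6)], [(6, 5), (6, 7)], [(6, 8)],
    [(10, 5), (20, 7)], [(6, 8), (10, 9)], [(10, 10)], [(18, 10)], [(12, 11)], [(6, 12)],
    [(10, 13)], [], [(6, 15)], [(10, 16)], [(12, 17)], [(6, 18)], [(10, 19)], [(6, 20)], []]

lemma derivation_two {R : Type*} [CommRing R] [Algebra ℚ R] (D : Derivation ℚ R R) :
    D 2 = 0 := by
  exact_mod_cast D.map_natCast 2

lemma eG2_apply (k : Fin 21) : eG2 (gG2 k) = ColSys.lin gG2 (upG2 k) := by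
  fin_cases k <;>
    simp [eG2, gG2, fG2, upG2, ColSys.lin, Derivation.leibniz, Derivation.leibniz_pow,
      mkDerivation_X, derivation_two] <;> ring

lemma hG2_apply (k : Fin 21) : hG2 (gG2 k) = ColSys.lin gG2 (downG2 k) := by
  fin_cases k <;>
    simp [hG2, gG2, fG2, downG2, ColSys.lin, Derivation.leibniz, Derivation.leibniz_pow,
      mkDerivation_X, derivation_two] <;> ring

/-- The straightening relations: the product of each incompatible pair of columns as a combination
of compatible products. -/
def relG2 : List (Fin 21 × Fin 21 × List (ℤ × Fin 21 × Fin 21)) :=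
  [(2, 2, [(-1, 0, 4), (1, 1, 3)]), (2, 3, [(-1, 0, 5), (-1, 0, 7), (1, 1, 6)]),
    (2, 4, [(-1, 0, 9), (1, 1, 7)]), (2, 5, [(-1, 0, 10), (1, 1, 8)]),
    (2, 14, [(-1, 0, 16), (1, 1, 15)]), (3, 3, [(-1, 0, 8), (1, 2, 6)]),
    (3, 4, [(-1, 0, 10), (1, 2, 7)]), (3, 5, [(-1, 0, 11), (1, 2, 8)]),
    (3, 14, [(-1, 0, 17), (1, 2, 15)]), (4, 4, [(-1, 1, 10), (1, 2, 9)]),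
    (4, 5, [(-1, 1, 11), (1, 2, 10)]), (4, 6, [(-1, 0, 11), (1, 3, 7)]),
    (4, 7, [(-1, 2, 10), (1, 3, 9)]), (4, 8, [(-1, 2, 11), (1, 3, 10)]),
    (4, 14, [(-1, 1, 17), (1, 2, 16)]), (4, 15, [(-1, 2, 17), (1, 3, 16)]),
    (5, 5, [(1, 0, 13), (-1, 1, 12), (1, 2, 11)]), (5, 6, [(-1, 0, 12), (1, 3, 8)]),
    (5, 7, [(-1, 0, 13), (-1, 2, 11), (1, 3, 10)]), (5, 8, [(-1, 2, 12), (1, 3, 11)]),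
    (5, 9, [(-1, 1, 13), (1, 4, 10)]), (5, 10, [(-1, 2, 13), (1, 4, 11)]),
    (5, 11, [(-1, 3, 13), (1, 4, 12)]), (5, 14, [(1, 0, 19), (-1, 1, 18), (1, 2, 17)]),
    (5, 15, [(1, 0, 20), (-1, 2, 18), (1, 3, 17)]),
    (5, 16, [(1, 1, 20), (-1, 2, 19), (1, 4, 17)]),
    (5, 17, [(1, 2, 20), (-1, 3, 19), (1, 4, 18)]), (6, 14, [(-1, 0, 18), (1, 3, 15)]),
    (7, 7, [(1, 0, 13), (-1, 3, 10), (1, 6, 9)]), (7, 8, [(-1, 3, 11), (1, 6, 10)]),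
    (7, 14, [(-1, 0, 19), (-1, 2, 17), (1, 3, 16)]),
    (7, 15, [(-1, 0, 20), (-1, 3, 17), (1, 6, 16)]), (8, 8, [(-1, 3, 12), (1, 6, 11)]),
    (8, 9, [(-1, 2, 13), (1, 7, 10)]), (8, 10, [(-1, 3, 13), (1, 7, 11)]),
    (8, 11, [(-1, 6, 13), (1, 7, 12)]), (8, 14, [(-1, 2, 18), (1, 3, 17)]),
    (8, 15, [(-1, 3, 18), (1, 6, 17)]), (8, 16, [(1, 2, 20), (-1, 3, 19), (1, 7, 17)]),
    (8, 17, [(1, 3, 20), (-1, 6, 19), (1, 7, 18)]), (9, 14, [(-1, 1, 19), (1, 4, 16)]),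
    (9, 15, [(-1, 2, 19), (1, 7, 16)]), (10, 10, [(-1, 4, 13), (1, 9, 11)]),
    (10, 11, [(-1, 5, 13), (-1, 7, 13), (1, 9, 12)]), (10, 14, [(-1, 2, 19), (1, 4, 17)]),
    (10, 15, [(-1, 3, 19), (1, 7, 17)]), (10, 16, [(-1, 4, 19), (1, 9, 17)]),
    (10, 17, [(1, 4, 20), (-1, 5, 19), (-1, 7, 19), (1, 9, 18)]),
    (11, 11, [(-1, 8, 13), (1, 10, 12)]), (11, 14, [(-1, 3, 19), (1, 4, 18)]),
    (11, 15, [(-1, 6, 19), (1, 7, 18)]), (11, 16, [(-1, 5, 19), (-1, 7, 19), (1, 9, 18)]),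
    (11, 17, [(-1, 8, 19), (1, 10, 18)]), (12, 14, [(-1, 3, 20), (1, 5, 18)]),
    (12, 15, [(-1, 6, 20), (1, 8, 18)]), (12, 16, [(-1, 5, 20), (-1, 7, 20), (1, 10, 18)]),
    (12, 17, [(-1, 8, 20), (1, 11, 18)]), (13, 14, [(-1, 4, 20), (1, 5, 19)]),
    (13, 15, [(-1, 7, 20), (1, 8, 19)]), (13, 16, [(-1, 9, 20), (1, 10, 19)]),
    (13, 17, [(-1, 10, 20), (1, 11, 19)]), (13, 18, [(-1, 11, 20), (1, 12, 19)]),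
    (17, 17, [(1, 14, 20), (-1, 15, 19), (1, 16, 18)])]

set_option maxHeartbeats 4000000 in
lemma relG2_spec {R : Type*} [CommRing R] (X Y a b c d e w : R) :
    ∀ r ∈ relG2, fG2 X Y a b c d e w r.1 * fG2 X Y a b c d e w r.2.1 =
      ColSys.quad (fG2 X Y a b c d e w) r.2.2 := by
  simp only [relG2, List.forall_mem_cons, List.not_mem_nil, false_imp_iff, implies_true, and_true]
  refine ⟨?_, ?_, ?_, ?_, ?_, ?_, ?_, ?_, ?_, ?_, ?_, ?_, ?_, ?_, ?_, ?_, ?_, ?_, ?_, ?_, ?_, ?_,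
    ?_, ?_, ?_, ?_, ?_, ?_, ?_, ?_, ?_, ?_, ?_, ?_, ?_, ?_, ?_, ?_, ?_, ?_, ?_, ?_, ?_, ?_,
    ?_, ?_, ?_, ?_, ?_, ?_, ?_, ?_, ?_, ?_, ?_, ?_, ?_, ?_, ?_, ?_, ?_, ?_, ?_⟩ <;>
    simp [ColSys.quad, fG2] <;> ring

/-- The exponents of the leading monomials of the column functions after the substitution
`psiG2`. -/
def exG2 : Fin 21 → Fin 6 → ℕ :=
  ![![0, 0, 0, 0, 0, 0], ![0, 0, 0, 0, 0, 1], ![0, 0, 0, 0, 1, 1], ![0, 0, 0, 0, 2, 1],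
    ![0, 0, 0, 1, 2, 1], ![0, 0, 1, 1, 2, 1], ![0, 0, 0, 0, 3, 1], ![0, 0, 0, 1, 3, 1],
    ![0, 0, 1, 1, 3, 1], ![0, 0, 0, 2, 3, 1], ![0, 0, 1, 2, 3, 1], ![0, 0, 2, 2, 3, 1],
    ![0, 0, 3, 2, 3, 1], ![0, 1, 3, 2, 3, 1], ![0, 0, 0, 0, 0, 0], ![0, 0, 0, 0, 1, 0],
    ![0, 0, 0, 1, 1, 0], ![0, 0, 1, 1, 1, 0], ![0, 0, 2, 1, 1, 0], ![0, 1, 2, 1, 1, 0],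
    ![1, 1, 2, 1, 1, 0]]

/-- The remaining terms of the column functions after the substitution `psiG2`. -/
def restG2 : Fin 21 → List (ℤ × (Fin 6 → ℕ)) :=
  ![[],
    [],
    [(-1, ![0, 0, 0, 1, 1, 0]), (-1, ![0, 1, 0, 0, 1, 0])],
    [(-1, ![0, 0, 1, 1, 1, 0]), (-1, ![1, 1, 1, 0, 0, 0]), (-1, ![0, 0, 0, 1, 2, 0]),
     (-1, ![0, 1, 0, 0, 2, 0])],
    [(-1, ![0, 0, 1, 1, 1, 1]), (-1, ![1, 1, 1, 0, 0, 1]), (-1, ![0, 0, 0, 2, 2, 0]),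
     (-2, ![0, 1, 0, 1, 2, 0]), (-1, ![0, 2, 0, 0, 2, 0]), (1, ![0, 1, 0, 0, 2, 1])],
    [(1, ![0, 1, 2, 1, 1, 0]), (-1, ![0, 0, 2, 1, 1, 1]), (-1, ![0, 0, 1, 2, 2, 0]),
     (-1, ![1, 1, 1, 1, 1, 0]), (-1, ![0, 1, 1, 1, 2, 0]), (-1, ![1, 2, 1, 0, 1, 0]),
     (1, ![1, 1, 1, 0, 1, 1])],
    [(-1, ![0, 0, 2, 1, 1, 0]), (-1, ![0, 0, 1, 1, 2, 0]), (-1, ![1, 1, 1, 0, 1, 0]),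
     (-1, ![0, 0, 0, 1, 3, 0]), (-1, ![0, 1, 0, 0, 3, 0])],
    [(-1, ![0, 1, 2, 1, 1, 0]), (-1, ![0, 0, 1, 1, 2, 1]), (-1, ![1, 1, 1, 0, 1, 1]),
     (-1, ![0, 0, 0, 2, 3, 0]), (-2, ![0, 1, 0, 1, 3, 0]), (-1, ![0, 2, 0, 0, 3, 0]),
     (1, ![0, 1, 0, 0, 3, 1])],
    [(-2, ![1, 1, 2, 1, 1, 0]), (-1, ![2, 2, 2, 0, 0, 0]), (1, ![0, 1, 2, 1, 2, 0]),
     (-1, ![0, 0, 2, 1, 2, 1]), (-1, ![0, 0, 1, 2, 3, 0]), (-1, ![1, 1, 1, 1, 2, 0]),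
     (-1, ![0, 1, 1, 1, 3, 0]), (-1, ![1, 2, 1, 0, 2, 0]), (1, ![1, 1, 1, 0, 2, 1])],
    [(-1, ![0, 1, 2, 1, 1, 1]), (-1, ![0, 0, 1, 2, 2, 1]), (-1, ![1, 1, 1, 1, 1, 1]),
     (-1, ![0, 1, 1, 1, 2, 1]), (-1, ![1, 2, 1, 0, 1, 1]), (-1, ![0, 0, 0, 3, 3, 0]),
     (-3, ![0, 1, 0, 2, 3, 0]), (-3, ![0, 2, 0, 1, 3, 0]), (-1, ![0, 3, 0, 0, 3, 0]),
     (2, ![0, 1, 0, 1, 3, 1]), (1, ![0, 2, 0, 0, 3, 1])],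
    [(-1, ![0, 0, 2, 2, 2, 1]), (-2, ![1, 1, 2, 1, 1, 1]), (-1, ![2, 2, 2, 0, 0, 1]),
     (1, ![0, 1, 2, 2, 2, 0]), (1, ![0, 2, 2, 1, 2, 0]), (-1, ![0, 0, 1, 3, 3, 0]),
     (-1, ![1, 1, 1, 2, 2, 0]), (-2, ![0, 1, 1, 2, 3, 0]), (-2, ![1, 2, 1, 1, 2, 0]),
     (-1, ![0, 2, 1, 1, 3, 0]), (-1, ![1, 3, 1, 0, 2, 0]), (-1, ![0, 1, 2, 1, 2, 1]),
     (1, ![1, 1, 1, 1, 2, 1]), (1, ![0, 1, 1, 1, 3, 1]), (1, ![1, 2, 1, 0, 2, 1])],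
    [(1, ![0, 1, 3, 2, 2, 0]), (1, ![1, 2, 3, 1, 1, 0]), (-1, ![0, 0, 3, 2, 2, 1]),
     (-1, ![1, 1, 3, 1, 1, 1]), (-1, ![0, 0, 2, 3, 3, 0]), (-1, ![0, 1, 2, 2, 3, 0])],
    [(1, ![0, 1, 4, 2, 2, 0]), (-1, ![0, 0, 4, 2, 2, 1]), (-1, ![0, 0, 3, 3, 3, 0]),
     (1, ![1, 1, 3, 2, 2, 0]), (3, ![2, 2, 3, 1, 1, 0]), (1, ![3, 3, 3, 0, 0, 0]),
     (-1, ![0, 1, 3, 2, 3, 0]), (-1, ![1, 2, 3, 1, 2, 0]), (1, ![1, 1, 3, 1, 2, 1]),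
     (2, ![1, 1, 2, 2, 3, 0]), (1, ![2, 2, 2, 1, 2, 0]), (2, ![1, 2, 2, 1, 3, 0]),
     (1, ![2, 3, 2, 0, 2, 0]), (-2, ![1, 1, 2, 1, 3, 1]), (-1, ![2, 2, 2, 0, 2, 1])],
    [(1, ![0, 2, 4, 2, 2, 0]), (-1, ![0, 1, 4, 2, 2, 1]), (2, ![1, 1, 3, 2, 2, 1]),
     (3, ![2, 2, 3, 1, 1, 1]), (1, ![3, 3, 3, 0, 0, 1]), (-1, ![0, 1, 3, 3, 3, 0]),
     (-1, ![1, 2, 3, 2, 2, 0]), (-1, ![0, 2, 3, 2, 3, 0]), (-1, ![1, 3, 3, 1, 2, 0]),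
     (1, ![1, 2, 3, 1, 2, 1]), (2, ![1, 1, 2, 3, 3, 0]), (1, ![2, 2, 2, 2, 2, 0]),
     (4, ![1, 2, 2, 2, 3, 0]), (2, ![2, 3, 2, 1, 2, 0]), (2, ![1, 3, 2, 1, 3, 0]),
     (1, ![2, 4, 2, 0, 2, 0]), (-2, ![1, 1, 2, 2, 3, 1]), (-1, ![2, 2, 2, 1, 2, 1]),
     (-2, ![1, 2, 2, 1, 3, 1]), (-1, ![2, 3, 2, 0, 2, 1])],
    [],
    [],
    [(1, ![0, 1, 0, 0, 1, 0])],
    [(1, ![1, 1, 1, 0, 0, 0])],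
    [],
    [],
    [(1, ![2, 2, 2, 0, 0, 0])]]

lemma map_fG2 {R S : Type*} [CommRing R] [CommRing S] (φ : R →+* S) (X Y a b c d e w : R)
    (k : Fin 21) : φ (fG2 X Y a b c d e w k) =
      fG2 (φ X) (φ Y) (φ a) (φ b) (φ c) (φ d) (φ e) (φ w) k := by
  fin_cases k <;> simp [fG2, map_ofNat]

/-- A specialisation of the column functions under which their leading monomials determine
a standard multiset of given shape. -/
noncomputable def psiG2 : MvPolynomial (Fin 8) ℚ →ₐ[ℚ] MvPolynomial (Fin 6) ℚ :=
  aeval ![1, 1, X 4, X 3 * X 4 + X 1 * X 4, X 2 * X 3 * X 4 + X 0 * X 1 * X 2,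
    X 2 ^ 2 * X 3 * X 4, X 1 * X 2 ^ 2 * X 3 * X 4, X 5]

lemma psiG2_apply (k : Fin 21) :
    psiG2 (gG2 k) = polyOf
      (((![1, 1, 1, 1, 1, 1, 1, 1, 1, 1, 1, 1, 1, 1, 1, 1, 1, 1, 1, 1, 2] : Fin 21 → ℤ) k,
        exG2 k) :: restG2 k) := by
  have h := map_fG2 (psiG2 : MvPolynomial (Fin 8) ℚ →+* MvPolynomial (Fin 6) ℚ)
    (X 0) (X 1) (X 2) (X 3) (X 4) (X 5) (X 6) (X 7) k
  simp only [psiG2, RingHom.coe_coe, aeval_X] at h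
  rw [gG2, psiG2, h]
  fin_cases k <;> simp [fG2, polyOf, exG2, restG2, Fin.prod_univ_six] <;> ring

lemma sum_fin21 (g : Fin 21 → ℕ) : ∑ k, g k =
    g 0 + (g 1 + (g 2 + (g 3 + (g 4 + (g 5 + (g 6 + (g 7 + (g 8 + (g 9 + (g 10 + (g 11 + (g 12 +
      (g 13 + (g 14 + (g 15 + (g 16 + (g 17 + (g 18 + (g 19 + g 20))))))))))))))))))) := by
  simp only [Fin.sum_univ_succ]
  simp

/-! In the next lemmas `x` lists the multiplicities of the columns in a standard multiset. The
exponents of the leading monomial determine them by successive elimination, from the entry `1`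
upwards; at each step the incompatibilities leave a single solution. -/

lemma excl_one {x : Fin 21 → ℕ} (hx : G2sys.StdCount x) :
    (x 14 = 0 ∨ x 2 + (x 3 + x 4 + x 5) +
      (x 6 + x 7 + x 8 + x 9 + x 10 + x 11 + x 12 + x 13) = 0) ∧
    x 2 + (x 3 + x 4 + x 5) ≤ 1 := by
  constructor
  · have h : ∀ k : Fin 21, 2 ≤ k → k ≤ 13 → x k = 0 ∨ x 14 = 0 := fun k h1 h2 =>
      hx.1 k 14 (lt_of_le_of_lt h2 (by decide)) (by revert k; decide)
    rcases Nat.eq_zero_or_pos (x 14) with h0 | h0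
    · exact Or.inl h0
    · have h' : ∀ k : Fin 21, 2 ≤ k → k ≤ 13 → x k = 0 := fun k h1 h2 =>
        (h k h1 h2).resolve_right h0.ne'
      right
      simp [h']
  · have h1 := hx.1 2 3 (by decide) (by decide)
    have h2 := hx.1 2 4 (by decide) (by decide)
    have h3 := hx.1 2 5 (by decide) (by decide)
    have h4 := hx.1 3 4 (by decide) (by decide)
    have h5 := hx.1 3 5 (by decide) (by decide)
    have h6 := hx.1 4 5 (by decide) (by decide)
    have h7 := hx.2 2 (by decide)
    have h8 := hx.2 3 (by decide)
    have h9 := hx.2 4 (by decide)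
    have h10 := hx.2 5 (by decide)
    omega

lemma excl_two {x : Fin 21 → ℕ} (hx : G2sys.StdCount x) :
    (x 15 = 0 ∨ (x 4 + x 5) + (x 7 + x 8) + (x 9 + x 10 + x 11 + x 12 + x 13) = 0) ∧
    (x 4 + x 5) + (x 7 + x 8) ≤ 1 ∧ (x 4 + x 5 = 0 ∨ x 6 = 0) := by
  refine ⟨?_, ?_, ?_⟩
  · have h := hx.1 4 15 (by decide) (by decide)
    have h1 := hx.1 5 15 (by decide) (by decide)
    have h2 := hx.1 7 15 (by decide) (by decide)
    have h3 := hx.1 8 15 (by decide) (by decide)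
    have h4 := hx.1 9 15 (by decide) (by decide)
    have h5 := hx.1 10 15 (by decide) (by decide)
    have h6 := hx.1 11 15 (by decide) (by decide)
    have h7 := hx.1 12 15 (by decide) (by decide)
    have h8 := hx.1 13 15 (by decide) (by decide)
    omega
  · have h1 := hx.1 4 5 (by decide) (by decide)
    have h2 := hx.1 4 7 (by decide) (by decide)
    have h3 := hx.1 4 8 (by decide) (by decide)
    have h4 := hx.1 5 7 (by decide) (by decide)
    have h5 := hx.1 5 8 (by decide) (by decide)
    have h6 := hx.1 7 8 (by decide) (by decide)
    have h7 := hx.2 4 (by decide)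
    have h8 := hx.2 5 (by decide)
    have h9 := hx.2 7 (by decide)
    have h10 := hx.2 8 (by decide)
    omega
  · have h1 := hx.1 4 6 (by decide) (by decide)
    have h2 := hx.1 5 6 (by decide) (by decide)
    omega

lemma excl_three {x : Fin 21 → ℕ} (hx : G2sys.StdCount x) :
    (x 16 = 0 ∨ x 5 + x 8 + x 10 + x 11 + (x 12 + x 13) = 0) ∧
    (x 17 = 0 ∨ x 5 + x 8 + x 10 + x 11 + (x 12 + x 13) = 0) ∧ x 17 ≤ 1 ∧
    x 5 + x 8 + x 10 + x 11 ≤ 1 ∧ (x 5 + x 8 = 0 ∨ x 9 = 0) := by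
  refine ⟨?_, ?_, hx.2 17 (by decide), ?_, ?_⟩
  · have h1 := hx.1 5 16 (by decide) (by decide)
    have h2 := hx.1 8 16 (by decide) (by decide)
    have h3 := hx.1 10 16 (by decide) (by decide)
    have h4 := hx.1 11 16 (by decide) (by decide)
    have h5 := hx.1 12 16 (by decide) (by decide)
    have h6 := hx.1 13 16 (by decide) (by decide)
    omega
  · have h1 := hx.1 5 17 (by decide) (by decide)
    have h2 := hx.1 8 17 (by decide) (by decide)
    have h3 := hx.1 10 17 (by decide) (by decide)
    have h4 := hx.1 11 17 (by decide) (by decide)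
    have h5 := hx.1 12 17 (by decide) (by decide)
    have h6 := hx.1 13 17 (by decide) (by decide)
    omega
  · have h1 := hx.1 5 8 (by decide) (by decide)
    have h2 := hx.1 5 10 (by decide) (by decide)
    have h3 := hx.1 5 11 (by decide) (by decide)
    have h4 := hx.1 8 10 (by decide) (by decide)
    have h5 := hx.1 8 11 (by decide) (by decide)
    have h6 := hx.1 10 11 (by decide) (by decide)
    have h7 := hx.2 5 (by decide)
    have h8 := hx.2 8 (by decide)
    have h9 := hx.2 10 (by decide)
    have h10 := hx.2 11 (by decide)
    omega
  · have h1 := hx.1 5 9 (by decide) (by decide)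
    have h2 := hx.1 8 9 (by decide) (by decide)
    omega

lemma stage_one {m s q d r m' s' q' d' r' : ℕ}
    (h : (m = 0 ∨ s + q + d = 0) ∧ s + q ≤ 1) (h' : (m' = 0 ∨ s' + q' + d' = 0) ∧ s' + q' ≤ 1)
    (h1 : m + r = m' + r') (h2 : s + 2 * q + 3 * d + r = s' + 2 * q' + 3 * d' + r') :
    m = m' ∧ s = s' ∧ q = q' ∧ d = d' := by
  omega

lemma stage_two {m s t u v d r m' s' t' u' v' d' r' : ℕ}
    (h : (m = 0 ∨ s + t + d = 0) ∧ s + t ≤ 1 ∧ (s = 0 ∨ u = 0))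
    (h' : (m' = 0 ∨ s' + t' + d' = 0) ∧ s' + t' ≤ 1 ∧ (s' = 0 ∨ u' = 0))
    (h1 : m + r = m' + r') (h2 : s + t + 2 * d + r = s' + t' + 2 * d' + r')
    (h3 : u + t + d = u' + t' + d') (h4 : v + s = v' + s') :
    m = m' ∧ s = s' ∧ t = t' ∧ u = u' ∧ v = v' ∧ d = d' := by
  omega

lemma stage_three_aux {m t r q d e m' t' r' q' d' e' : ℕ}
    (h : m = 0 ∨ q + d + e = 0) (ht : t = 0 ∨ q + d + e = 0) (ht1 : t ≤ 1) (hq : q + d ≤ 1)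
    (h' : m' = 0 ∨ q' + d' + e' = 0) (ht' : t' = 0 ∨ q' + d' + e' = 0) (ht1' : t' ≤ 1)
    (hq' : q' + d' ≤ 1) (h1 : m + t + r = m' + t' + r')
    (h2 : q + 2 * d + 3 * e + t + 2 * r = q' + 2 * d' + 3 * e' + t' + 2 * r') :
    m = m' ∧ t = t' ∧ q = q' ∧ d = d' ∧ e = e' := by
  rcases h with h | h <;> rcases ht with ht | ht <;> rcases h' with h' | h' <;>
    rcases ht' with ht' | ht' <;> omega

lemma stage_three {m t r a b c d e f g z m' t' r' a' b' c' d' e' f' g' z' : ℕ}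
    (h : (m = 0 ∨ a + b + c + d + e = 0) ∧ (t = 0 ∨ a + b + c + d + e = 0) ∧ t ≤ 1 ∧
      a + b + c + d ≤ 1 ∧ (a + b = 0 ∨ f = 0))
    (h' : (m' = 0 ∨ a' + b' + c' + d' + e' = 0) ∧ (t' = 0 ∨ a' + b' + c' + d' + e' = 0) ∧
      t' ≤ 1 ∧ a' + b' + c' + d' ≤ 1 ∧ (a' + b' = 0 ∨ f' = 0))
    (h1 : m + t + r = m' + t' + r')
    (h2 : a + b + c + 2 * d + 3 * e + t + 2 * r = a' + b' + c' + 2 * d' + 3 * e' + t' + 2 * r')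
    (h3 : f + c + d + e = f' + c' + d' + e') (h4 : g + a = g' + a') (h5 : z + b = z' + b')
    (h6 : (g + a) + (z + b) ≤ 1) :
    m = m' ∧ t = t' ∧ a = a' ∧ b = b' ∧ c = c' ∧ d = d' ∧ f = f' := by
  obtain ⟨hm, ht, ha, hb, hc⟩ := stage_three_aux (q := a + b + c) (q' := a' + b' + c')
    h.1 h.2.1 h.2.2.1 h.2.2.2.1 h'.1 h'.2.1 h'.2.2.1 h'.2.2.2.1 h1 h2
  obtain ⟨-, -, -, hq, hf⟩ := h
  obtain ⟨-, -, -, hq', hf'⟩ := h'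
  clear h1 h2
  rcases hf with hf | hf <;> rcases hf' with hf' | hf' <;> omega

lemma stage_four {m n z e r m' n' z' e' r' : ℕ} (h : e = 0 ∨ m = 0) (h' : e' = 0 ∨ m' = 0)
    (h0 : z = z') (h1 : e + (n + z) = e' + (n' + z')) (h2 : m + n + z = m' + n' + z')
    (h3 : r + e = r' + e') : e = e' ∧ r = r' ∧ m = m' ∧ n = n' := by
  omega

/-- The leading monomials determine the multiplicities of a standard multiset of given shape. -/
lemma inj_G2 (x y : Fin 21 → ℕ) (hx : G2sys.StdCount x) (hy : G2sys.StdCount y)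
    (hk : ∑ k, x k • G2sys.kind k = ∑ k, y k • G2sys.kind k)
    (he : ∑ k, x k • exG2 k = ∑ k, y k • exG2 k) : x = y := by
  have e0 := congrFun he 0
  have e1 := congrFun he 1
  have e2 := congrFun he 2
  have e3 := congrFun he 3
  have e4 := congrFun he 4
  have e5 := congrFun he 5
  simp only [Finset.sum_apply, Pi.smul_apply, smul_eq_mul, sum_fin21] at e0 e1 e2 e3 e4 e5
  simp only [exG2, Matrix.cons_val, mul_zero, mul_one, zero_add, add_zero] at e0 e1 e2 e3 e4 e5
  have k1 := congrArg Prod.fst hk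
  simp only [Prod.fst_sum, Prod.smul_fst, smul_eq_mul, sum_fin21] at k1
  have k2 := congrArg Prod.snd hk
  simp only [Prod.snd_sum, Prod.smul_snd, smul_eq_mul, sum_fin21] at k2
  simp [ColSys.kind, G2sys] at k1 k2
  obtain ⟨x14, x2, q, d⟩ := stage_one (excl_one hx) (excl_one hy)
    (r := x 15 + x 16 + x 17 + x 18 + x 19 + x 20)
    (r' := y 15 + y 16 + y 17 + y 18 + y 19 + y 20) (by linarith only [k2]) (by linarith only [e4])
  obtain ⟨x15, s, t, x6, x3, d2⟩ := stage_two (excl_two hx) (excl_two hy)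
    (r := x 16 + x 17 + x 18 + x 19 + x 20) (r' := y 16 + y 17 + y 18 + y 19 + y 20)
    (v := x 3) (v' := y 3) (by linarith only [k2, x14]) (by linarith only [e3])
    (by linarith only [d]) (by linarith only [q])
  obtain ⟨x16, x17, x5, x8, x10, x11, x9⟩ := stage_three (excl_three hx) (excl_three hy)
    (r := x 18 + x 19 + x 20) (r' := y 18 + y 19 + y 20) (g := x 4) (g' := y 4) (z := x 7)
    (z' := y 7) (by linarith only [k2, x14, x15]) (by linarith only [e2])
    (by linarith only [d2]) (by linarith only [s]) (by linarith only [t]) (excl_two hx).2.1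
  obtain ⟨x13, x12, x18, x19⟩ := stage_four (hx.1 13 18 (by decide) (by decide))
    (hy.1 13 18 (by decide) (by decide)) e0 e1 (r := x 12) (r' := y 12)
    (by linarith only [k2, x14, x15, x16, x17])
    (by linarith only [d2, x9, x10, x11])
  have x4 : x 4 = y 4 := by linarith only [s, x5]
  have x7 : x 7 = y 7 := by linarith only [t, x8]
  have x1 : x 1 = y 1 := by linarith only [e5, x2, q, d]
  have x0 : x 0 = y 0 := by linarith only [k1, e5]
  funext k
  fin_cases k <;> assumption

theorem G2_symm_unimodal (a b : ℕ) :
    (∀ j, j ≤ 6 * a + 10 * b → (G2sys.stdSet (b, a) j).ncard =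
      (G2sys.stdSet (b, a) (6 * a + 10 * b - j)).ncard) ∧
    (∀ i j, i ≤ j → j ≤ (6 * a + 10 * b) / 2 →
      (G2sys.stdSet (b, a) i).ncard ≤ (G2sys.stdSet (b, a) j).ncard) := by
  refine G2sys.symm_unimodal gG2 eG2 hG2 ?_ ?_
    (G2sys.comm_of_table gG2 _ _ upG2 downG2 eG2_apply hG2_apply (by decide +kernel))
    (by decide)
    -- concave in the rank, with ranks of columns of length two shifted by `6`: straightening
    -- preserves the sum of the ranks of the two columns and spreads them apart
    (fun k => if (k : ℕ) < 14 then 400 - (G2sys.rk k + 6) ^ 2 else 100 - G2sys.rk k ^ 2)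
    (G2sys.straighten_of_table gG2 _ relG2 (relG2_spec _ _ _ _ _ _ _ _)
      (by decide +kernel) (by decide +kernel))
    psiG2 ![0, 0, 1, 1, 2, 2] exG2 ?_ (G2sys.inj_of_count _ inj_G2) (b, a) _
    (by simp [G2sys]; ring)
  · intro k
    rw [eG2_apply]
    exact G2sys.lin_mem_V _ _ _ _ (by revert k; decide +kernel)
  · intro k
    rw [hG2_apply]
    exact G2sys.lin_mem_V _ _ _ _ (by revert k; decide +kernel)
  · intro k
    rw [psiG2_apply]
    refine top_polyOf _ _ _ _ ?_ ?_
    · revert k; decide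
    · revert k; decide +kernel

/-- The columns of length two. -/
def dcG2 : Fin 21 → ℕ × ℕ :=
  ![(1, 2), (1, 3), (1, 4), (1, 5), (1, 6), (1, 7), (2, 5), (2, 6), (2, 7), (3, 6), (3, 7), (4, 7),
    (5, 7), (6, 7), 0, 0, 0, 0, 0, 0, 0]

/-- The columns of length one. -/
def scG2 : Fin 21 → ℕ := ![0, 0, 0, 0, 0, 0, 0, 0, 0, 0, 0, 0, 0, 0, 1, 2, 3, 4, 5, 6, 7]

set_option synthInstance.maxHeartbeats 200000 in
set_option synthInstance.maxSize 2000 in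
instance (c c' : ℕ × ℕ) : Decidable (g2pair2 c c') := by
  unfold g2pair2
  infer_instance

set_option synthInstance.maxHeartbeats 200000 in
set_option synthInstance.maxSize 2000 in
instance (c : ℕ × ℕ) (e : ℕ) : Decidable (g2pair1 c e) := by
  unfold g2pair1
  infer_instance

/-- Two columns of length two, given by their numbers, with weakly increasing rows. -/
def RowLe (k k' : Fin 21) : Prop :=
  (dcG2 k).1 ≤ (dcG2 k').1 ∧ (dcG2 k).2 ≤ (dcG2 k').2

instance (k k' : Fin 21) : Decidable (RowLe k k') := by
  unfold RowLe
  infer_instance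

lemma RowLe.le : ∀ k k' : Fin 21, (k : ℕ) < 14 → (k' : ℕ) < 14 → RowLe k k' → k ≤ k' := by
  decide +kernel

/-- Compatibility of columns of length two contains both the row condition and the restrictions on
adjacent columns. -/
lemma rowLe_of_ok : ∀ k k' : Fin 21, (k : ℕ) < 14 → (k' : ℕ) < 14 → k ≤ k' →
    G2sys.ok k k' = true → RowLe k k' ∧ g2pair2 (dcG2 k) (dcG2 k') := by
  decide +kernel

lemma ok_of_pair2 : ∀ k k' : Fin 21, (k : ℕ) < 14 → (k' : ℕ) < 14 → RowLe k k' →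
    g2pair2 (dcG2 k) (dcG2 k') → G2sys.ok k k' = true := by
  decide +kernel

/-- Compatibility with a column persists further to the right; this is why restrictions on adjacent
columns give compatibility of all pairs. -/
lemma ok_rowLe : ∀ k x k' : Fin 21, (k : ℕ) < 14 → (x : ℕ) < 14 → (k' : ℕ) < 14 →
    RowLe k x → G2sys.ok k x = true → RowLe x k' → G2sys.ok k k' = true := by
  decide +kernel

lemma ok_single_iff : ∀ k s : Fin 21, (k : ℕ) < 14 → 14 ≤ (s : ℕ) →
    (G2sys.ok k s = true ↔ (dcG2 k).1 ≤ scG2 s ∧ g2pair1 (dcG2 k) (scG2 s)) := by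
  decide +kernel

lemma ok_single_right : ∀ k s s' : Fin 21, (k : ℕ) < 14 → 14 ≤ (s : ℕ) → 14 ≤ (s' : ℕ) →
    G2sys.ok k s = true → s ≤ s' → G2sys.ok k s' = true := by
  decide +kernel

lemma ok_single_left : ∀ k x s : Fin 21, (k : ℕ) < 14 → (x : ℕ) < 14 → 14 ≤ (s : ℕ) →
    RowLe k x → G2sys.ok k x = true → G2sys.ok x s = true → G2sys.ok k s = true := by
  decide +kernel

lemma single_le_iff : ∀ s s' : Fin 21, 14 ≤ (s : ℕ) → 14 ≤ (s' : ℕ) →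
    (s ≤ s' ↔ scG2 s ≤ scG2 s') := by
  decide +kernel

lemma ok_singles_iff : ∀ s s' : Fin 21, 14 ≤ (s : ℕ) → 14 ≤ (s' : ℕ) →
    (G2sys.ok s s' = true ↔ ¬ (scG2 s = 4 ∧ scG2 s' = 4)) := by
  decide +kernel

lemma mem_SG2_iff {a b : ℕ} (u : Fin b → Fin 21) (v : Fin a → Fin 21)
    (hu : ∀ j, (u j : ℕ) < 14) (hv : ∀ i, 14 ≤ (v i : ℕ)) :
    (dcG2 ∘ u, scG2 ∘ v) ∈ SG2 a b ↔ (u, v) ∈ G2sys.tab a b := by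
  constructor
  · rintro ⟨-, -, h3, h4, h5, h6, -, h8, h9⟩
    have hrow : ∀ j j', j ≤ j' → RowLe (u j) (u j') := h3
    have hmono : Monotone v := fun i i' h => (single_le_iff _ _ (hv i) (hv i')).mpr (h4 i i' h)
    have hok : ∀ j j', j < j' → G2sys.ok (u j) (u j') = true := by
      intro j j' h
      -- the right neighbour of column `j`
      have hlt : (j : ℕ) + 1 < b := by omega
      refine ok_rowLe _ (u ⟨j + 1, hlt⟩) _ (hu _) (hu _) (hu _) (hrow _ _ ?_)
        (ok_of_pair2 _ _ (hu _) (hu _) (hrow _ _ ?_) (h8 _ _ rfl)) (hrow _ _ ?_) <;>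
      · simp only [Fin.le_def]
        omega
    refine ⟨hu, hv, fun j j' h => RowLe.le _ _ (hu j) (hu j') (hrow j j' h), hmono, hok,
      fun i i' h => (ok_singles_iff _ _ (hv i) (hv i')).mpr fun hii => h.ne (h6 i i' hii.1 hii.2),
      fun j i => ?_⟩
    -- the last column of length two and the first of length one
    have hb : b - 1 < b := Nat.sub_one_lt_of_lt j.isLt
    have ha : 0 < a := i.pos
    have h0 : G2sys.ok (u ⟨b - 1, hb⟩) (v ⟨0, ha⟩) = true :=
      (ok_single_iff _ _ (hu _) (hv _)).mpr
        ⟨h5 _ _, h9 _ _ (show b - 1 + 1 = b by omega) rfl⟩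
    have h1 : G2sys.ok (u j) (v ⟨0, ha⟩) = true := by
      rcases (show j ≤ ⟨b - 1, hb⟩ by simp only [Fin.le_def]; omega).eq_or_lt with h | h
      · rwa [h]
      · exact ok_single_left _ _ _ (hu _) (hu _) (hv _) (hrow _ _ h.le) (hok _ _ h) h0
    exact ok_single_right _ _ _ (hu j) (hv _) (hv i) h1
      (hmono (by simp only [Fin.le_def]; omega))
  · rintro ⟨-, -, h3, h4, h5, h6, h7⟩
    have hrow : ∀ j j', j < j' → RowLe (u j) (u j') ∧ g2pair2 (dcG2 (u j)) (dcG2 (u j')) :=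
      fun j j' h => rowLe_of_ok _ _ (hu j) (hu j') (h3 h.le) (h5 j j' h)
    refine ⟨fun j => ?_, fun i => ?_, fun j j' h => ?_,
      fun i i' h => (single_le_iff _ _ (hv i) (hv i')).mp (h4 h),
      fun j i => ((ok_single_iff _ _ (hu j) (hv i)).mp (h7 j i)).1, fun i i' hi hi' => ?_,
      fun j => ?_, fun j j' h => (hrow j j' (by simp only [Fin.lt_def]; omega)).2,
      fun j i _ _ => ((ok_single_iff _ _ (hu j) (hv i)).mp (h7 j i)).2⟩
    · have : ∀ k : Fin 21, (k : ℕ) < 14 → 1 ≤ (dcG2 k).1 ∧ (dcG2 k).1 ≤ 7 ∧ 1 ≤ (dcG2 k).2 ∧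
          (dcG2 k).2 ≤ 7 ∧ (dcG2 k).1 < (dcG2 k).2 := by decide
      exact this _ (hu j)
    · have : ∀ k : Fin 21, 14 ≤ (k : ℕ) → 1 ≤ scG2 k ∧ scG2 k ≤ 7 := by decide
      exact this _ (hv i)
    · rcases h.eq_or_lt with rfl | h
      · exact ⟨le_rfl, le_rfl⟩
      · exact (hrow j j' h).1
    · rcases lt_trichotomy i i' with h | h | h
      · exact absurd ⟨hi, hi'⟩ ((ok_singles_iff _ _ (hv i) (hv i')).mp (h6 i i' h))
      · exact h
      · exact absurd ⟨hi', hi⟩ ((ok_singles_iff _ _ (hv i') (hv i)).mp (h6 i' i h))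
    · have : ∀ k : Fin 21, (k : ℕ) < 14 → dcG2 k ≠ (2, 3) ∧ dcG2 k ≠ (2, 4) ∧ dcG2 k ≠ (3, 4) ∧
          dcG2 k ≠ (3, 5) ∧ dcG2 k ≠ (4, 5) ∧ dcG2 k ≠ (4, 6) ∧ dcG2 k ≠ (5, 6) := by
        decide +kernel
      exact this _ (hu j)

set_option synthInstance.maxHeartbeats 200000 in
set_option synthInstance.maxSize 2000 in
lemma ncard_G2 (a b r : ℕ) : NG2 a b r = (G2sys.stdSet (b, a) r).ncard := by
  refine G2sys.ncard_fillings (SG2 a b) rG2 dcG2 scG2 (by decide +kernel) (by decide +kernel)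
    mem_SG2_iff ?_ ?_ ?_ r
  · rintro T ⟨h, -, -, -, -, -, h', -⟩ j
    have h0 := h j
    have h6 := h' j
    generalize T.1 j = c at *
    obtain ⟨x, y⟩ := c
    obtain ⟨h1, h2, h3, h4, h5⟩ := h0
    have key : ∀ x < 8, ∀ y < 8, 1 ≤ x → x < y → ((x, y) ≠ (2, 3) ∧ (x, y) ≠ (2, 4) ∧
        (x, y) ≠ (3, 4) ∧ (x, y) ≠ (3, 5) ∧ (x, y) ≠ (4, 5) ∧ (x, y) ≠ (4, 6) ∧ (x, y) ≠ (5, 6)) →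
        ∃ k : Fin 21, (k : ℕ) < 14 ∧ dcG2 k = (x, y) := by decide +kernel
    exact key x (by omega) y (by omega) h1 h5 h6
  · rintro T ⟨-, h, -⟩ i
    have h0 := h i
    generalize T.2 i = x at *
    have key : ∀ x < 8, 1 ≤ x → ∃ k : Fin 21, 14 ≤ (k : ℕ) ∧ scG2 k = x := by decide +kernel
    exact key x (by omega) h0.1
  · rintro u v ⟨hu, hv, -⟩
    have h1 : ∀ k : Fin 21, (k : ℕ) < 14 → cG2col (dcG2 k) = G2sys.rk k := by decide +kernel
    have h2 : ∀ k : Fin 21, 14 ≤ (k : ℕ) → 7 - scG2 k = G2sys.rk k := by decide +kernel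
    exact congrArg₂ (· + ·) (Finset.sum_congr rfl fun j _ => h1 _ (hu j))
      (Finset.sum_congr rfl fun i _ => h2 _ (hv i))

end TypeG

/-- For each `g ∈ {A2, C2, G2}`, the rank-size sequence `N_0, N_1, …, N_l` of the
`g`-semistandard lattice of shape `(a,b)` (with `l = 2a+2b`, `3a+4b`, `6a+10b`
respectively) is symmetric and unimodal. -/
theorem semistandard_rank_symmetric_unimodal (a b : ℕ) :
    ((∀ j, j ≤ 2 * a + 2 * b → NA2 a b j = NA2 a b (2 * a + 2 * b - j)) ∧
      (∀ i j, i ≤ j → j ≤ (2 * a + 2 * b) / 2 → NA2 a b i ≤ NA2 a b j)) ∧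
    ((∀ j, j ≤ 3 * a + 4 * b → NC2 a b j = NC2 a b (3 * a + 4 * b - j)) ∧
      (∀ i j, i ≤ j → j ≤ (3 * a + 4 * b) / 2 → NC2 a b i ≤ NC2 a b j)) ∧
    ((∀ j, j ≤ 6 * a + 10 * b → NG2 a b j = NG2 a b (6 * a + 10 * b - j)) ∧
      (∀ i j, i ≤ j → j ≤ (6 * a + 10 * b) / 2 → NG2 a b i ≤ NG2 a b j)) := by
  have hA := A2_symm_unimodal a b
  have hC := C2_symm_unimodal a b
  have hG := G2_symm_unimodal a b
  simp only [← ncard_A2, ← ncard_C2, ← ncard_G2] at hA hC hG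
  exact ⟨hA, hC, hG⟩
end

section
/- For all integers a, b ≥ 0: 2 · |S_A2(a,b)| = (a+1)(b+1)(a+b+2); 6 · |S_C2(a,b)| = (a+1)(b+1)(a+b+2)(a+2b+3); and 120 · |S_G2(a,b)| = (a+1)(b+1)(a+b+2)(a+2b+3)(a+3b+4)(2a+3b+5). (These counts are the dimensions of the irreducible representations of the rank two simple Lie algebras A2, C2, G2 with highest weight a ω_α + b ω_β.) -/
/-! ### Tableaux as paths in a transition system -/

/-- A transition system for tableaux: the admissible columns of length two and of length one
(`cols`, `ents`), and which column may stand immediately to the right of which: `cc` for two columns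
of length two, `ce` for length two followed by length one, `ee` for two columns of length one. -/
structure Rules where
  cols : Finset (ℕ × ℕ)
  ents : Finset ℕ
  cc : ℕ × ℕ → ℕ × ℕ → Bool
  ce : ℕ × ℕ → ℕ → Bool
  ee : ℕ → ℕ → Bool

namespace Rules

/-- Admissible sequences of `a` columns of length one whose first entry, if any, satisfies `f`. -/
def rows (R : Rules) (a : ℕ) (f : ℕ → Bool) : Set (Fin a → ℕ) :=
  {q | (∀ i, q i ∈ R.ents) ∧ (∀ i : Fin a, (i : ℕ) = 0 → f (q i)) ∧
    ∀ i i' : Fin a, (i' : ℕ) = i + 1 → R.ee (q i) (q i')}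

/-- Tableaux of shape `(a, b)` which may stand immediately to the right of the column `c`. If `b = 0`
it is the first column of length one that has to be compatible with `c`. -/
def tabs (R : Rules) (a b : ℕ) (c : ℕ × ℕ) : Set (TabT a b) :=
  {T | (∀ j, T.1 j ∈ R.cols) ∧ (∀ i, T.2 i ∈ R.ents) ∧
    (∀ j : Fin b, (j : ℕ) = 0 → R.cc c (T.1 j)) ∧
    (b = 0 → ∀ i : Fin a, (i : ℕ) = 0 → R.ce c (T.2 i)) ∧
    (∀ j j' : Fin b, (j' : ℕ) = j + 1 → R.cc (T.1 j) (T.1 j')) ∧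
    (∀ i i' : Fin a, (i' : ℕ) = i + 1 → R.ee (T.2 i) (T.2 i')) ∧
    ∀ (j : Fin b) (i : Fin a), (j : ℕ) + 1 = b → (i : ℕ) = 0 → R.ce (T.1 j) (T.2 i)}

lemma rows_finite (R : Rules) (a : ℕ) (f : ℕ → Bool) : (R.rows a f).Finite :=
  (Set.Finite.pi' fun _ : Fin a => R.ents.finite_toSet).subset fun _ hq => hq.1

lemma tabs_finite (R : Rules) (a b : ℕ) (c : ℕ × ℕ) : (R.tabs a b c).Finite :=
  ((Set.Finite.pi' fun _ : Fin b => R.cols.finite_toSet).prod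
    (Set.Finite.pi' fun _ : Fin a => R.ents.finite_toSet)).subset fun _ hT => ⟨hT.1, hT.2.1⟩

/-- Counting by the first letter: `T` is the disjoint union over `e ∈ A` of the images of `S e` under
the jointly injective map `g`. -/
lemma ncard_eq_sum {α β γ : Type*} (A : Finset α) (g : α → β → γ)
    (hg : Function.Injective2 g) (S : α → Set β) (hS : ∀ e, (S e).Finite) (T : Set γ)
    (hT : ∀ t, t ∈ T ↔ ∃ e ∈ A, ∃ s ∈ S e, g e s = t) :
    T.ncard = ∑ e ∈ A, (S e).ncard := by
  classical
  have h : T = ((A.sigma fun e => (hS e).toFinset).image fun p => g p.1 p.2 : Finset γ) := by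
    ext t
    simp only [hT, Finset.coe_image, Set.mem_image, Finset.mem_coe, Finset.mem_sigma,
      Set.Finite.mem_toFinset, Sigma.exists]
    grind
  rw [h, Set.ncard_coe_finset, Finset.card_image_of_injective, Finset.card_sigma]
  · exact Finset.sum_congr rfl fun e _ => (Set.ncard_eq_toFinset_card _ _).symm
  · rintro ⟨e, s⟩ ⟨e', s'⟩ h
    obtain ⟨rfl, rfl⟩ := hg h
    rfl

lemma cons_mem_rows (R : Rules) (a : ℕ) (f : ℕ → Bool) (e : ℕ) (q : Fin a → ℕ) :
    (Fin.cons e q : Fin (a + 1) → ℕ) ∈ R.rows (a + 1) f ↔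
      (e ∈ R.ents ∧ f e) ∧ q ∈ R.rows a (R.ee e) := by
  simp only [rows, Set.mem_ofPred_eq, Fin.forall_fin_succ, Fin.cons_zero, Fin.cons_succ,
    Fin.val_zero, Fin.val_succ]
  simp
  tauto

lemma cons_mem_tabs (R : Rules) (a b : ℕ) (c d : ℕ × ℕ) (p : Fin b → ℕ × ℕ) (q : Fin a → ℕ) :
    ((Fin.cons d p, q) : TabT a (b + 1)) ∈ R.tabs a (b + 1) c ↔
      (d ∈ R.cols ∧ R.cc c d) ∧ (p, q) ∈ R.tabs a b d := by
  simp only [tabs, Set.mem_ofPred_eq, Fin.forall_fin_succ, Fin.cons_zero, Fin.cons_succ,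
    Fin.val_zero, Fin.val_succ]
  simp
  tauto

lemma ncard_rows_succ (R : Rules) (a : ℕ) (f : ℕ → Bool) :
    (R.rows (a + 1) f).ncard = ∑ e ∈ R.ents with f e, (R.rows a (R.ee e)).ncard := by
  refine ncard_eq_sum _ (fun e q => (Fin.cons e q : Fin (a + 1) → ℕ))
    (Fin.cons_injective2 (α := fun _ => ℕ)) _
    (fun _ => R.rows_finite _ _) _ fun t => ?_
  induction t using Fin.consCases with | _ e q
  simp only [cons_mem_rows, Finset.mem_filter, Fin.cons_inj]
  grind

lemma ncard_tabs_succ (R : Rules) (a b : ℕ) (c : ℕ × ℕ) :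
    (R.tabs a (b + 1) c).ncard = ∑ d ∈ R.cols with R.cc c d, (R.tabs a b d).ncard := by
  refine ncard_eq_sum _ (fun d T => ((Fin.cons d T.1, T.2) : TabT a (b + 1)))
    (fun d d' T T' h => ?_) _ (fun _ => R.tabs_finite _ _ _) _ fun t => ?_
  · simp only [Prod.mk.injEq, Fin.cons_inj] at h
    exact ⟨h.1.1, Prod.ext h.1.2 h.2⟩
  · obtain ⟨p, q⟩ := t
    induction p using Fin.consCases with | _ d p
    simp only [cons_mem_tabs, Finset.mem_filter, Prod.exists, Prod.mk.injEq, Fin.cons_inj]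
    grind

lemma ncard_tabs_zero (R : Rules) (a : ℕ) (c : ℕ × ℕ) :
    (R.tabs a 0 c).ncard = (R.rows a (R.ce c)).ncard := by
  refine (Set.ncard_congr (fun q _ => ((Fin.elim0, q) : TabT a 0)) ?_ ?_ ?_).symm
  · intro q hq
    simpa [tabs, rows] using hq
  · intro q q' _ _ h
    exact congrArg Prod.snd h
  · rintro ⟨p, q⟩ h
    refine ⟨q, by simpa [tabs, rows] using h, Prod.ext (Subsingleton.elim _ _) rfl⟩

lemma ncard_rows_zero (R : Rules) (f : ℕ → Bool) : (R.rows 0 f).ncard = 1 := by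
  rw [Set.ncard_eq_one]
  exact ⟨Fin.elim0, Set.eq_singleton_iff_unique_mem.2 ⟨by simp [rows], fun _ _ =>
    Subsingleton.elim _ _⟩⟩

/-- Functions `P`, `Q` satisfying the recursions of the transition system count the continuations of
each letter. -/
theorem ncard_tabs_eq (R : Rules) (P : ℕ → ℚ → ℚ) (Q : ℕ × ℕ → ℚ → ℚ → ℚ)
    (hP0 : ∀ e ∈ R.ents, P e 0 = 1)
    (hP : ∀ e ∈ R.ents, ∀ x, P e (x + 1) = ∑ e' ∈ R.ents, if R.ee e e' then P e' x else 0)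
    (hQ0 : ∀ c ∈ R.cols, Q c 0 0 = 1)
    (hQP : ∀ c ∈ R.cols, ∀ x, Q c (x + 1) 0 = ∑ e ∈ R.ents, if R.ce c e then P e x else 0)
    (hQ : ∀ c ∈ R.cols, ∀ x y, Q c x (y + 1) = ∑ d ∈ R.cols, if R.cc c d then Q d x y else 0)
    (a b : ℕ) (c : ℕ × ℕ) (hc : c ∈ R.cols) : ((R.tabs a b c).ncard : ℚ) = Q c a b := by
  have hrow : ∀ n : ℕ, ∀ e ∈ R.ents, ((R.rows n (R.ee e)).ncard : ℚ) = P e n := by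
    intro n
    induction n with
    | zero => intro e he; simp [ncard_rows_zero, hP0 e he]
    | succ n ih =>
      intro e he
      rw [ncard_rows_succ, Nat.cast_succ, hP e he, Nat.cast_sum, ← Finset.sum_filter]
      exact Finset.sum_congr rfl fun e' h => ih e' (Finset.mem_filter.1 h).1
  induction b generalizing c with
  | zero =>
    rw [ncard_tabs_zero]
    cases a with
    | zero => simp [ncard_rows_zero, hQ0 c hc]
    | succ n =>
      rw [ncard_rows_succ, Nat.cast_succ, Nat.cast_zero, hQP c hc, Nat.cast_sum, ← Finset.sum_filter]
      exact Finset.sum_congr rfl fun e h => hrow n e (Finset.mem_filter.1 h).1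
  | succ n ih =>
    rw [ncard_tabs_succ, Nat.cast_succ, hQ c hc, Nat.cast_sum, ← Finset.sum_filter]
    exact Finset.sum_congr rfl fun d h => ih d (Finset.mem_filter.1 h).1

end Rules

/-! ### From adjacent to global conditions -/

lemma monotone_of_adjacent {α : Type*} [Preorder α] {n : ℕ} {q : Fin n → α}
    (h : ∀ i i' : Fin n, (i' : ℕ) = i + 1 → q i ≤ q i') : Monotone q := by
  cases n with
  | zero => exact fun i => i.elim0
  | succ n => exact Fin.monotone_iff_le_succ.2 fun i => h _ _ (by simp)

/-- In a monotone sequence, a value that never occurs at two adjacent places occurs at most once,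
since all terms between two occurrences are equal to it. -/
lemma eq_of_adjacent {α : Type*} [PartialOrder α] {n : ℕ} {q : Fin n → α} (hq : Monotone q) {v : α}
    (h : ∀ i i' : Fin n, (i' : ℕ) = i + 1 → ¬(q i = v ∧ q i' = v)) (i i' : Fin n)
    (hi : q i = v) (hi' : q i' = v) : i = i' := by
  wlog hlt : i < i' generalizing i i'
  · rcases eq_or_lt_of_le (not_lt.1 hlt) with h' | h'
    · exact h'.symm
    · exact (this i' i hi' hi h').symm
  have hs : (i : ℕ) + 1 < n := by have := Fin.lt_def.1 hlt; omega
  refine absurd ⟨hi, le_antisymm ?_ ?_⟩ (h i ⟨i + 1, hs⟩ rfl)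
  · exact hi' ▸ hq (Fin.le_def.2 hlt)
  · exact hi ▸ hq (Fin.le_def.2 (Nat.le_succ _))

/-! ### The three transition systems and their counting polynomials -/

set_option synthInstance.maxSize 1000 in
set_option synthInstance.maxHeartbeats 200000 in
instance inst_s19 (c c' : ℕ × ℕ) : Decidable (g2pair2 c c') := by unfold g2pair2; infer_instance

instance inst_s19_2 (c : ℕ × ℕ) (e : ℕ) : Decidable (g2pair1 c e) := by unfold g2pair1; infer_instance

/-- The transition system of `A2`-semistandard tableaux. -/
def rulesA2 : Rules where
  cols := {(1, 2), (1, 3), (2, 3)}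
  ents := {1, 2, 3}
  cc c d := c ≤ d
  ce c e := c.1 ≤ e
  ee e e' := e ≤ e'

/-- The transition system of `C2`-semistandard tableaux. -/
def rulesC2 : Rules where
  cols := {(1, 2), (1, 3), (2, 3), (2, 4), (3, 4)}
  ents := {1, 2, 3, 4}
  cc c d := c ≤ d ∧ ¬(c = (2, 3) ∧ d = (2, 3))
  ce c e := c.1 ≤ e
  ee e e' := e ≤ e'

/-- The transition system of `G2`-semistandard tableaux. -/
def rulesG2 : Rules where
  cols := {(1, 2), (1, 3), (1, 4), (1, 5), (1, 6), (1, 7), (2, 5), (2, 6), (2, 7), (3, 6), (3, 7),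
    (4, 7), (5, 7), (6, 7)}
  ents := {1, 2, 3, 4, 5, 6, 7}
  cc c d := c ≤ d ∧ g2pair2 c d
  ce c e := c.1 ≤ e ∧ g2pair1 c e
  ee e e' := e ≤ e' ∧ ¬(e = 4 ∧ e' = 4)

/-- `rowA2 e x` is the number of ways to continue the entry `e` by `x` entries in type `A2`. The last
case is meant for `e = 3`. -/
def rowA2 : ℕ → ℚ → ℚ
  | 1, x => (x + 1) * (x + 2) / 2
  | 2, x => x + 1
  | _, _ => 1

/-- `polyA2 c x y` is the number of `A2`-tableaux of shape `(x, y)` that may follow the column `c`.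
The last case is meant for `c = (2, 3)`. -/
def polyA2 : ℕ × ℕ → ℚ → ℚ → ℚ
  | (1, 2), x, y => (x + 1) * (y + 1) * (x + y + 2) / 2
  | (1, 3), x, y => (x + 1) * (x + 2 * y + 2) / 2
  | _, x, _ => x + 1

/-- `rowC2 e x` is the number of ways to continue the entry `e` by `x` entries in type `C2`. The last
case is meant for `e = 4`. -/
def rowC2 : ℕ → ℚ → ℚ
  | 1, x => (x + 1) * (x + 2) * (x + 3) / 6
  | 2, x => (x + 1) * (x + 2) / 2
  | 3, x => x + 1
  | _, _ => 1

/-- `polyC2 c x y` is the number of `C2`-tableaux of shape `(x, y)` that may follow the column `c`.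
The last case is meant for `c = (3, 4)`. -/
def polyC2 : ℕ × ℕ → ℚ → ℚ → ℚ
  | (1, 2), x, y => (x + 1) * (y + 1) * (x + y + 2) * (x + 2 * y + 3) / 6
  | (1, 3), x, y => (x + 1) * (6 * (y + 1) ^ 2 + 5 * x + 6 * x * y + x ^ 2) / 6
  | (2, _), x, y => (x + 1) * (x + 2 * y + 2) / 2
  | _, x, _ => x + 1

/-- `rowG2 e x` is the number of ways to continue the entry `e` by `x` entries in type `G2`. The last
case is meant for `e = 7`. -/
def rowG2 : ℕ → ℚ → ℚ
  | 1, x => (x + 1) * (x + 2) * (x + 3) * (x + 4) * (2 * x + 5) / 120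
  | 2, x => (x + 1) * (x + 2) ^ 2 * (x + 3) / 12
  | 3, x => (x + 1) * (x + 2) * (2 * x + 3) / 6
  | 4, x | 5, x => (x + 1) * (x + 2) / 2
  | 6, x => x + 1
  | _, _ => 1

/-- `polyG2 c x y` is the number of `G2`-tableaux of shape `(x, y)` that may follow the column `c`.
The last case is meant for the columns `(i, 7)` with `i ≤ 5`. -/
def polyG2 : ℕ × ℕ → ℚ → ℚ → ℚ
  | (1, 2), x, y => (x + 1) * (y + 1) * (x + y + 2) * (x + 2 * y + 3) * (x + 3 * y + 4) *
      (2 * x + 3 * y + 5) / 120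
  | (1, 3), x, y => (x + 1) * (120 + 420 * y + 570 * y ^ 2 + 360 * y ^ 3 + 90 * y ^ 4 +
      x * (178 + 510 * y + 510 * y ^ 2 + 180 * y ^ 3) + x ^ 2 * (97 + 210 * y + 120 * y ^ 2) +
      x ^ 3 * (23 + 30 * y) + 2 * x ^ 4) / 120
  | (1, 4), x, y | (_, 5), x, y =>
      (x + 1) * (x + 2 * y + 2) * (6 * (y + 1) ^ 2 + 5 * x + 6 * x * y + x ^ 2) / 12
  | (_, 6), x, y => (x + 1) * (x + 3 * y + 2) * (2 * x + 3 * y + 3) / 6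
  | (6, 7), x, _ => x + 1
  | _, x, y => (x + 1) * (x + 2 * y + 2) / 2

lemma ncard_rulesA2 (a b : ℕ) :
    ((rulesA2.tabs a b (1, 2)).ncard : ℚ) =
      (a + 1) * (b + 1) * (a + b + 2) / 2 := by
  refine rulesA2.ncard_tabs_eq rowA2 polyA2 ?_ ?_ ?_ ?_ ?_ a b (1, 2) (by decide) <;>
    simp only [rulesA2, Finset.forall_mem_insert, Finset.mem_singleton, forall_eq]
  all_goals and_intros
  all_goals intros
  all_goals simp [rowA2, polyA2]
  all_goals ring

lemma ncard_rulesC2 (a b : ℕ) :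
    ((rulesC2.tabs a b (1, 2)).ncard : ℚ) =
      (a + 1) * (b + 1) * (a + b + 2) * (a + 2 * b + 3) / 6 := by
  refine rulesC2.ncard_tabs_eq rowC2 polyC2 ?_ ?_ ?_ ?_ ?_ a b (1, 2) (by decide) <;>
    simp only [rulesC2, Finset.forall_mem_insert, Finset.mem_singleton, forall_eq]
  all_goals and_intros
  all_goals intros
  all_goals simp [rowC2, polyC2]
  all_goals ring

set_option maxHeartbeats 2000000 in
lemma ncard_rulesG2 (a b : ℕ) :
    ((rulesG2.tabs a b (1, 2)).ncard : ℚ) =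
      (a + 1) * (b + 1) * (a + b + 2) * (a + 2 * b + 3) * (a + 3 * b + 4) *
        (2 * a + 3 * b + 5) / 120 := by
  refine rulesG2.ncard_tabs_eq rowG2 polyG2 ?_ ?_ ?_ ?_ ?_ a b (1, 2) (by decide) <;>
    simp only [rulesG2, Finset.forall_mem_insert, Finset.mem_singleton, forall_eq]
  all_goals and_intros
  all_goals intros
  all_goals simp [rowG2, polyG2, g2pair1, g2pair2]
  all_goals ring

/-! ### Semistandard tableaux as paths -/

/-- Comparing the last column of length two with the first of length one is enough to compare the
top row of the former with all of the latter. -/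
lemma snd_ge {a b : ℕ} {T : TabT a b} (hp : Monotone T.1) (hq : Monotone T.2)
    (h : ∀ (j : Fin b) (i : Fin a), (j : ℕ) + 1 = b → (i : ℕ) = 0 → (T.1 j).1 ≤ T.2 i)
    (j : Fin b) (i : Fin a) : (T.1 j).1 ≤ T.2 i := by
  have hb : 0 < b := j.pos
  have ha : 0 < a := i.pos
  calc (T.1 j).1 ≤ (T.1 ⟨b - 1, by omega⟩).1 := (hp (Fin.le_def.2 (by simp; omega))).1
    _ ≤ T.2 ⟨0, ha⟩ := h _ _ (by simp; omega) rfl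
    _ ≤ T.2 i := hq (Fin.le_def.2 (Nat.zero_le _))

lemma mem_colsA2 (c : ℕ × ℕ) : c ∈ rulesA2.cols ↔
    1 ≤ c.1 ∧ c.1 ≤ 3 ∧ 1 ≤ c.2 ∧ c.2 ≤ 3 ∧ c.1 < c.2 := by
  obtain ⟨x, y⟩ := c
  simp only [rulesA2, Finset.mem_insert, Finset.mem_singleton, Prod.mk.injEq]
  omega

lemma mem_colsC2 (c : ℕ × ℕ) : c ∈ rulesC2.cols ↔
    (1 ≤ c.1 ∧ c.1 ≤ 4 ∧ 1 ≤ c.2 ∧ c.2 ≤ 4 ∧ c.1 < c.2) ∧ c ≠ (1, 4) := by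
  obtain ⟨x, y⟩ := c
  simp only [rulesC2, Finset.mem_insert, Finset.mem_singleton, Prod.mk.injEq, ne_eq]
  omega

lemma mem_colsG2 (c : ℕ × ℕ) : c ∈ rulesG2.cols ↔
    (1 ≤ c.1 ∧ c.1 ≤ 7 ∧ 1 ≤ c.2 ∧ c.2 ≤ 7 ∧ c.1 < c.2) ∧
      c ≠ (2, 3) ∧ c ≠ (2, 4) ∧ c ≠ (3, 4) ∧ c ≠ (3, 5) ∧ c ≠ (4, 5) ∧ c ≠ (4, 6) ∧
        c ≠ (5, 6) := by
  obtain ⟨x, y⟩ := c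
  simp only [rulesG2, Finset.mem_insert, Finset.mem_singleton, Prod.mk.injEq, ne_eq]
  constructor
  · omega
  · rintro ⟨⟨h1, h2, h3, h4, h5⟩, h⟩
    interval_cases x <;> interval_cases y <;> simp_all

lemma mem_entsA2 (e : ℕ) : e ∈ rulesA2.ents ↔ 1 ≤ e ∧ e ≤ 3 := by
  simp only [rulesA2, Finset.mem_insert, Finset.mem_singleton]; omega

lemma mem_entsC2 (e : ℕ) : e ∈ rulesC2.ents ↔ 1 ≤ e ∧ e ≤ 4 := by
  simp only [rulesC2, Finset.mem_insert, Finset.mem_singleton]; omega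

lemma mem_entsG2 (e : ℕ) : e ∈ rulesG2.ents ↔ 1 ≤ e ∧ e ≤ 7 := by
  simp only [rulesG2, Finset.mem_insert, Finset.mem_singleton]; omega

/-- If every letter may follow `c`, then the conditions involving `c` are void. -/
lemma Rules.mem_tabs_of_free (R : Rules) {c : ℕ × ℕ} (hcc : ∀ d ∈ R.cols, R.cc c d)
    (hce : ∀ e ∈ R.ents, R.ce c e) {a b : ℕ} (T : TabT a b) :
    T ∈ R.tabs a b c ↔ (∀ j, T.1 j ∈ R.cols) ∧ (∀ i, T.2 i ∈ R.ents) ∧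
      (∀ j j' : Fin b, (j' : ℕ) = j + 1 → R.cc (T.1 j) (T.1 j')) ∧
      (∀ i i' : Fin a, (i' : ℕ) = i + 1 → R.ee (T.2 i) (T.2 i')) ∧
      ∀ (j : Fin b) (i : Fin a), (j : ℕ) + 1 = b → (i : ℕ) = 0 → R.ce (T.1 j) (T.2 i) := by
  constructor
  · rintro ⟨h1, h2, -, -, h3⟩
    exact ⟨h1, h2, h3⟩
  · rintro ⟨h1, h2, h3⟩
    exact ⟨h1, h2, fun j _ => hcc _ (h1 j), fun _ i _ => hce _ (h2 i), h3⟩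

lemma le_of_succ {n : ℕ} {i i' : Fin n} (h : (i' : ℕ) = i + 1) : i ≤ i' :=
  Fin.le_def.2 (by omega)

lemma ne_of_succ {n : ℕ} {i i' : Fin n} (h : (i' : ℕ) = i + 1) : i ≠ i' := by
  rintro rfl; omega

lemma SA2_eq (a b : ℕ) : SA2 a b = rulesA2.tabs a b (1, 2) := by
  ext T
  rw [Rules.mem_tabs_of_free _ (by decide) (by decide)]
  simp only [mem_colsA2, mem_entsA2]
  simp only [rulesA2, decide_eq_true_eq]
  constructor
  · rintro ⟨h1, h2, h3, h4, h5⟩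
    exact ⟨h1, h2, fun j j' h => h3 _ _ (le_of_succ h), fun i i' h => h4 _ _ (le_of_succ h),
      fun j i _ _ => h5 j i⟩
  · rintro ⟨h1, h2, h3, h4, h5⟩
    have hp := monotone_of_adjacent h3
    have hq := monotone_of_adjacent h4
    exact ⟨h1, h2, fun j j' h => hp h, fun i i' h => hq h, snd_ge hp hq h5⟩

lemma SC2_eq (a b : ℕ) : SC2 a b = rulesC2.tabs a b (1, 2) := by
  ext T
  rw [Rules.mem_tabs_of_free _ (by decide) (by decide)]
  simp only [mem_colsC2, mem_entsC2]
  simp only [rulesC2, decide_eq_true_eq]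
  constructor
  · rintro ⟨h1, h2, h3, h4, h5, h6, h7⟩
    exact ⟨fun j => ⟨h1 j, h6 j⟩, h2,
      fun j j' h => ⟨h3 _ _ (le_of_succ h), fun hv => ne_of_succ h (h7 _ _ hv.1 hv.2)⟩,
      fun i i' h => h4 _ _ (le_of_succ h), fun j i _ _ => h5 j i⟩
  · rintro ⟨h1, h2, h3, h4, h5⟩
    have hp := monotone_of_adjacent fun j j' h => (h3 j j' h).1
    have hq := monotone_of_adjacent h4
    exact ⟨fun j => (h1 j).1, h2, fun j j' h => hp h, fun i i' h => hq h, snd_ge hp hq h5,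
      fun j => (h1 j).2, eq_of_adjacent hp fun j j' h => (h3 j j' h).2⟩

lemma SG2_eq (a b : ℕ) : SG2 a b = rulesG2.tabs a b (1, 2) := by
  ext T
  rw [Rules.mem_tabs_of_free _ (by decide) (by decide)]
  simp only [mem_colsG2, mem_entsG2]
  simp only [rulesG2, decide_eq_true_eq]
  constructor
  · rintro ⟨h1, h2, h3, h4, h5, h6, h7, h8, h9⟩
    exact ⟨fun j => ⟨h1 j, h7 j⟩, h2, fun j j' h => ⟨h3 _ _ (le_of_succ h), h8 _ _ h⟩,
      fun i i' h => ⟨h4 _ _ (le_of_succ h), fun hv => ne_of_succ h (h6 _ _ hv.1 hv.2)⟩,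
      fun j i hj hi => ⟨h5 j i, h9 j i hj hi⟩⟩
  · rintro ⟨h1, h2, h3, h4, h5⟩
    have hp := monotone_of_adjacent fun j j' h => (h3 j j' h).1
    have hq := monotone_of_adjacent fun i i' h => (h4 i i' h).1
    exact ⟨fun j => (h1 j).1, h2, fun j j' h => hp h, fun i i' h => hq h,
      snd_ge hp hq fun j i hj hi => (h5 j i hj hi).1,
      eq_of_adjacent hq fun i i' h => (h4 i i' h).2, fun j => (h1 j).2,
      fun j j' h => (h3 j j' h).2, fun j i hj hi => (h5 j i hj hi).2⟩

/-- Product formulas for the total numbers of `g`-semistandard tableaux of shape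
`(a,b)`, for `g ∈ {A2, C2, G2}`: these counts are the dimensions of the
corresponding irreducible representations. -/
theorem semistandard_cardinalities (a b : ℕ) :
    2 * (SA2 a b).ncard = (a + 1) * (b + 1) * (a + b + 2) ∧
    6 * (SC2 a b).ncard = (a + 1) * (b + 1) * (a + b + 2) * (a + 2 * b + 3) ∧
    120 * (SG2 a b).ncard =
      (a + 1) * (b + 1) * (a + b + 2) * (a + 2 * b + 3) * (a + 3 * b + 4) *
        (2 * a + 3 * b + 5) := by
  rw [SA2_eq, SC2_eq, SG2_eq]
  refine ⟨?_, ?_, ?_⟩ <;> qify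
  · rw [ncard_rulesA2]; ring
  · rw [ncard_rulesC2]; ring
  · rw [ncard_rulesG2]; ring
end
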